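/- arXiv:2307.16871 — 5 statements merged into one kernel-verified Lean document; each statement's English description precedes it below -/
import Mathlib

section
/- Let (Ξ, 𝒢, ℚ) be a complete probability space, (E, Δ) a complete metric space, T > 0, and X = (X_t)_{t∈[0,T]} a family of functions X_t: Ξ → E such that ω ↦ Δ(X_s(ω), X_t(ω)) is 𝒢-measurable for all s, t ∈ [0,T] and X is continuous in probability. Suppose there exist continuous, increasing functions δ: [0,T] → [0,∞) and θ: [0, T∨1] → [0,∞), with δ(0) = θ(0) = 0 and θ concave, such that for all 0 ≤ s ≤ t ≤ u ≤ T and all A ∈ 𝒢, E_ℚ[min(Δ(X_s, X_t), Δ(X_t, X_u)) · 1_A] ≤ δ(u−s) · θ(ℚ(A)), and such that ∫_0^T u^{−2} δ(u) θ(u) du < ∞. Then X has a càdlàg modification X′, i.e. a family X′ = (X′_t)_{t∈[0,T]} such that for every ω the path t ↦ X′_t(ω) is right-continuous with left limits on [0,T] and, for each t ∈ [0,T], the map ω ↦ Δ(X_t(ω), X′_t(ω)) is ℚ-a.s. equal to 0. -/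
open MeasureTheory Filter Set Topology


lemma aux_parent {E : Type*} [MetricSpace E] (y : ℕ → ℕ → E)
    (hy : ∀ n k, y (n+1) (2*k) = y n k) (w : ℝ) (hw0 : 0 ≤ w) (n : ℕ)
    (hw : ∀ k, k + 2 ≤ 2^(n+1) →
      min (dist (y (n+1) k) (y (n+1) (k+1))) (dist (y (n+1) (k+1)) (y (n+1) (k+2))) ≤ w) :
    ∃ p : ℕ → ℕ, Monotone p ∧ ∀ k ≤ 2^(n+1), p k ≤ 2^n ∧ 2 * p k ≤ k + 1 ∧ k ≤ 2 * p k + 1 ∧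
      dist (y (n+1) k) (y n (p k)) ≤ w := by
  classical
  refine ⟨fun k => if k % 2 = 0 then k / 2 else
    if dist (y (n+1) (k-1)) (y (n+1) k) ≤ dist (y (n+1) k) (y (n+1) (k+1)) then k/2
      else k/2+1, ?_, ?_⟩
  · refine monotone_nat_of_le_succ fun k => ?_
    split_ifs <;> omega
  · intro k hk
    have h2 : 2^(n+1) = 2 * 2^n := by ring
    dsimp only
    split_ifs with h h'
    · refine ⟨by omega, by omega, by omega, ?_⟩
      rw [← hy n (k/2), show 2*(k/2) = k by omega]
      simpa using hw0
    · refine ⟨by omega, by omega, by omega, ?_⟩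
      have := hw (k-1) (by omega)
      rw [show k - 1 + 1 = k by omega, show k - 1 + 2 = k+1 by omega, min_eq_left h'] at this
      rw [← hy n (k/2), show 2*(k/2) = k-1 by omega, dist_comm]
      exact this
    · refine ⟨by omega, by omega, by omega, ?_⟩
      have := hw (k-1) (by omega)
      rw [show k - 1 + 1 = k by omega, show k - 1 + 2 = k+1 by omega,
        min_eq_right (not_le.1 h').le] at this
      rw [← hy n (k/2+1), show 2*(k/2+1) = k+1 by omega]
      exact this

lemma aux_anc {E : Type*} [MetricSpace E] (y : ℕ → ℕ → E)
    (hy : ∀ n k, y (n+1) (2*k) = y n k) (W : ℕ → ℝ) (hw0 : ∀ n, 0 ≤ W n)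
    (hw : ∀ n k, k + 2 ≤ 2^n →
      min (dist (y n k) (y n (k+1))) (dist (y n (k+1)) (y n (k+2))) ≤ W n) (m g : ℕ) :
    ∃ q : ℕ → ℕ, Monotone q ∧ ∀ k ≤ 2^(m+g), q k ≤ 2^m ∧ q k * 2^g < k + 2^g ∧
      k < q k * 2^g + 2^g ∧
      dist (y (m+g) k) (y m (q k)) ≤ ∑ i ∈ Finset.range g, W (m+1+i) := by
  induction g with
  | zero => exact ⟨id, monotone_id, fun k hk => by simpa using hk⟩
  | succ g ih =>
    obtain ⟨q, hq, hq'⟩ := ih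
    obtain ⟨p, hp, hp'⟩ := aux_parent y hy (W (m+g+1)) (hw0 _) (m+g) (hw _)
    refine ⟨q ∘ p, hq.comp hp, fun k hk => ?_⟩
    obtain ⟨a1, a2, a3, a4⟩ := hp' k hk
    obtain ⟨b1, b2, b3, b4⟩ := hq' _ a1
    refine ⟨b1, ?_, ?_, ?_⟩
    · simp only [Function.comp]; rw [pow_succ, ← mul_assoc]; omega
    · simp only [Function.comp]; rw [pow_succ, ← mul_assoc]; omega
    · rw [Finset.sum_range_succ]
      have := dist_triangle (y (m+(g+1)) k) (y (m+g) (p k)) (y m (q (p k)))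
      rw [show m+1+g = m+g+1 by ring]
      change dist (y (m+(g+1)) k) (y (m+g) (p k)) ≤ _ at a4
      simp only [Function.comp]
      linarith

lemma aux_mod {E : Type*} [MetricSpace E] (y : ℕ → ℕ → E)
    (hy : ∀ n k, y (n+1) (2*k) = y n k) (W : ℕ → ℝ) (hw0 : ∀ n, 0 ≤ W n)
    (hw : ∀ n k, k + 2 ≤ 2^n →
      min (dist (y n k) (y n (k+1))) (dist (y n (k+1)) (y n (k+2))) ≤ W n)
    (hs : Summable W) (m g : ℕ) (k1 k2 k3 : ℕ) (h12 : k1 ≤ k2) (h23 : k2 ≤ k3)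
    (h3 : k3 ≤ 2^(m+g)) (h13 : k3 ≤ k1 + 2^g) :
    min (dist (y (m+g) k1) (y (m+g) k2)) (dist (y (m+g) k2) (y (m+g) k3)) ≤
      2 * ∑' i, W (i + m) := by
  obtain ⟨q, hq, hq'⟩ := aux_anc y hy W hw0 hw m g
  obtain ⟨a1, a2, a3, a4⟩ := hq' k1 (by omega)
  obtain ⟨b1, b2, b3, b4⟩ := hq' k2 (by omega)
  obtain ⟨c1, c2, c3, c4⟩ := hq' k3 (by omega)
  have hS : (∑ i ∈ Finset.range g, W (m+1+i)) + W m ≤ ∑' i, W (i + m) := by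
    have h := ((summable_nat_add_iff m).2 hs).sum_le_tsum (Finset.range (g+1))
      (fun i _ => hw0 (i + m))
    rw [Finset.sum_range_succ'] at h
    simp only [zero_add] at h
    refine le_trans (le_of_eq ?_) h
    congr 1
    exact Finset.sum_congr rfl fun i _ => by congr 1; ring
  have h1 := hq h12
  have h2 := hq h23
  have h5 : q k3 < q k1 + 3 := by
    have : q k3 * 2^g < (q k1 + 3) * 2^g := by rw [add_mul]; omega
    exact lt_of_mul_lt_mul_right this (Nat.zero_le _)
  have key : min (dist (y m (q k1)) (y m (q k2))) (dist (y m (q k2)) (y m (q k3))) ≤ W m := by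
    rcases h1.eq_or_lt with h | h
    · rw [h]; simpa using hw0 m
    rcases h2.eq_or_lt with h' | h'
    · rw [h']; simpa using hw0 m
    have e2 : q k2 = q k1 + 1 := by omega
    have e3 : q k3 = q k1 + 2 := by omega
    rw [e2, e3]
    exact hw m _ (by omega)
  have t1 := dist_triangle4 (y (m+g) k1) (y m (q k1)) (y m (q k2)) (y (m+g) k2)
  have t2 := dist_triangle4 (y (m+g) k2) (y m (q k2)) (y m (q k3)) (y (m+g) k3)
  rw [dist_comm (y m (q k2)) (y (m+g) k2)] at t1
  rw [dist_comm (y m (q k3)) (y (m+g) k3)] at t2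
  have := hw0 m
  rcases min_le_iff.1 key with h | h
  · exact min_le_iff.2 (Or.inl (by linarith))
  · exact min_le_iff.2 (Or.inr (by linarith))

/-- dyadic points of `[0,T]` -/
def auxD (T : ℝ) : Set ℝ := {s | ∃ n k : ℕ, k ≤ 2^n ∧ s = k * T / 2^n}

lemma auxD_level {T s : ℝ} (h : s ∈ auxD T) : ∃ n, ∀ m ≥ n, ∃ k : ℕ, k ≤ 2^m ∧ s = k * T / 2^m := by
  obtain ⟨n, k, hk, rfl⟩ := h
  refine ⟨n, fun m hm => ?_⟩
  obtain ⟨g, rfl⟩ := Nat.exists_eq_add_of_le hm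
  refine ⟨k * 2^g, ?_, ?_⟩
  · rw [pow_add]; gcongr
  · push_cast; rw [pow_add]; field_simp

lemma aux_modulus {E : Type*} [MetricSpace E] (T : ℝ) (hT : 0 < T) (x : ℝ → E)
    (W : ℕ → ℝ) (hw0 : ∀ n, 0 ≤ W n) (hs : Summable W)
    (hw : ∀ n k : ℕ, k + 2 ≤ 2^n →
      min (dist (x (k*T/2^n)) (x ((k+1 : ℕ)*T/2^n)))
       (dist (x ((k+1 : ℕ)*T/2^n)) (x ((k+2 : ℕ)*T/2^n))) ≤ W n) :
    ∀ ε > 0, ∃ η > 0, ∀ s1 ∈ auxD T, ∀ s2 ∈ auxD T, ∀ s3 ∈ auxD T, s1 ≤ s2 → s2 ≤ s3 →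
      s3 - s1 ≤ η → min (dist (x s1) (x s2)) (dist (x s2) (x s3)) ≤ ε := by
  intro ε hε
  have hlim := tendsto_sum_nat_add W
  obtain ⟨m, hm⟩ := (hlim.eventually_lt_const (half_pos hε)).exists
  refine ⟨T / 2^m, by positivity, fun s1 h1 s2 h2 s3 h3 h12 h23 h13 => ?_⟩
  obtain ⟨n1, h1⟩ := auxD_level h1
  obtain ⟨n2, h2⟩ := auxD_level h2
  obtain ⟨n3, h3⟩ := auxD_level h3
  obtain ⟨k1, _, e1⟩ := h1 (m + (n1 + n2 + n3)) (by omega)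
  obtain ⟨k2, _, e2⟩ := h2 (m + (n1 + n2 + n3)) (by omega)
  obtain ⟨k3, hk3, e3⟩ := h3 (m + (n1 + n2 + n3)) (by omega)
  generalize n1 + n2 + n3 = g at *
  have conv : ∀ a b : ℝ, a * T / 2^(m+g) ≤ b * T / 2^(m+g) → a ≤ b := by
    intro a b h
    rw [div_le_div_iff_of_pos_right (by positivity)] at h
    exact le_of_mul_le_mul_right h hT
  have := aux_mod (fun n k => x (k*T/2^n)) (fun n k => by
    congr 1; push_cast; rw [pow_succ]; field_simp) W hw0 hw hs m g k1 k2 k3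
    (by exact_mod_cast conv k1 k2 (by rw [← e1, ← e2]; exact h12))
    (by exact_mod_cast conv k2 k3 (by rw [← e2, ← e3]; exact h23)) hk3
    (by
      have : (k3 : ℝ) ≤ k1 + 2^g := conv _ _ (by
        rw [← e3, add_mul, add_div, ← e1]
        have : (2:ℝ)^g * T / 2^(m+g) = T / 2^m := by rw [pow_add]; field_simp
        linarith)
      exact_mod_cast this)
  simp only [← e1, ← e2, ← e3] at this
  linarith

lemma auxD_dense {T : ℝ} (hT : 0 < T) {a b : ℝ} (ha : 0 ≤ a) (hab : a < b) (hb : b ≤ T) :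
    ∃ s ∈ auxD T, a < s ∧ s < b := by
  obtain ⟨n, hn⟩ := pow_unbounded_of_one_lt (T / (b - a)) (one_lt_two (α := ℝ))
  have hp : (0:ℝ) < 2^n := by positivity
  have hba : 0 < b - a := by linarith
  rw [div_lt_iff₀ hba] at hn
  set k := ⌊a * 2^n / T⌋₊
  have h1 : (k : ℝ) ≤ a * 2^n / T := Nat.floor_le (by positivity)
  have h2 : a * 2^n / T < k + 1 := Nat.lt_floor_add_one _
  rw [le_div_iff₀ hT] at h1
  rw [div_lt_iff₀ hT] at h2
  have hlt : ((k:ℝ) + 1) * T < b * 2^n := by nlinarith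
  refine ⟨(k+1 : ℕ) * T / 2^n, ⟨n, k+1, ?_, rfl⟩, ?_, ?_⟩
  · have : ((k:ℝ)+1) * T < 2^n * T := by nlinarith
    have := lt_of_mul_lt_mul_right this hT.le
    have : k + 1 < 2^n := by exact_mod_cast this
    omega
  · rw [lt_div_iff₀ hp]; push_cast; linarith
  · rw [div_lt_iff₀ hp]; push_cast; linarith

lemma auxD_mem {T : ℝ} (hT : 0 < T) {s : ℝ} (h : s ∈ auxD T) : s ∈ Icc 0 T := by
  obtain ⟨n, k, hk, rfl⟩ := h
  refine ⟨by positivity, ?_⟩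
  rw [div_le_iff₀ (by positivity), mul_comm]
  have : (k:ℝ) ≤ 2^n := by exact_mod_cast hk
  gcongr

lemma aux_left {E : Type*} [MetricSpace E] [CompleteSpace E] (T : ℝ) (hT : 0 < T) (x : ℝ → E)
    (H : ∀ ε > 0, ∃ η > 0, ∀ s1 ∈ auxD T, ∀ s2 ∈ auxD T, ∀ s3 ∈ auxD T, s1 ≤ s2 → s2 ≤ s3 →
      s3 - s1 ≤ η → min (dist (x s1) (x s2)) (dist (x s2) (x s3)) ≤ ε)
    (t : ℝ) (ht : t ∈ Ioc 0 T) :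
    ∃ L, ∀ ε > 0, ∃ a < t, 0 ≤ a ∧ ∀ s ∈ auxD T, a < s → s < t → dist (x s) L ≤ ε := by
  have key : ∀ ε > 0, ∃ a < t, 0 ≤ a ∧ ∀ s ∈ auxD T, ∀ s' ∈ auxD T, a < s → s < t → a < s' → s' < t →
      dist (x s) (x s') ≤ 2 * ε := by
    intro ε hε
    obtain ⟨η, hη, h⟩ := H ε hε
    by_cases hc : ∃ s1 ∈ auxD T, ∃ s2 ∈ auxD T, s1 ≤ s2 ∧ t - η < s1 ∧ s2 < t ∧
        ε < dist (x s1) (x s2)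
    · obtain ⟨s1, m1, s2, m2, h12, g1, g2, hd⟩ := hc
      have hh : ∀ s ∈ auxD T, s2 < s → s < t → dist (x s2) (x s) ≤ ε := by
        intro s ms g3 g4
        rcases min_le_iff.1 (h s1 m1 s2 m2 s ms h12 g3.le (by linarith)) with h | h
        · linarith
        · exact h
      refine ⟨s2, g2, (auxD_mem hT m2).1, fun s ms s' ms' q1 q2 q3 q4 => ?_⟩
      have := dist_triangle_left (x s) (x s') (x s2)
      linarith [hh s ms q1 q2, hh s' ms' q3 q4]
    · push Not at hc
      refine ⟨max (t - η) 0, max_lt (by linarith) ht.1, le_max_right _ _,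
        fun s ms s' ms' q1 q2 q3 q4 => ?_⟩
      have := (max_lt_iff.1 q1).1
      have := (max_lt_iff.1 q3).1
      rcases le_total s s' with hl | hl
      · linarith [hc s ms s' ms' hl (by linarith) q4]
      · rw [dist_comm]
        linarith [hc s' ms' s ms hl (by linarith) q2]
  have hne : (𝓝[auxD T ∩ Ico 0 t] t).NeBot := by
    rw [mem_closure_iff_nhdsWithin_neBot.symm, Metric.mem_closure_iff]
    intro ε hε
    obtain ⟨s, ms, q1, q2⟩ := auxD_dense hT (le_max_right (t - ε) 0)
      (max_lt (by linarith) ht.1) ht.2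
    have := max_lt_iff.1 q1
    refine ⟨s, ⟨ms, this.2.le, q2⟩, ?_⟩
    rw [Real.dist_eq, abs_lt]; constructor <;> linarith
  have hC : Cauchy (map x (𝓝[auxD T ∩ Ico 0 t] t)) := by
    rw [Metric.cauchy_iff]
    refine ⟨hne.map _, fun ε hε => ?_⟩
    obtain ⟨a, ha, ha0, h⟩ := key (ε/4) (by linarith)
    refine ⟨x '' (auxD T ∩ Ioo a t), image_mem_map ?_, ?_⟩
    · rw [mem_nhdsWithin]
      exact ⟨Ioi a, isOpen_Ioi, ha, fun s hs => ⟨hs.2.1, hs.1, hs.2.2.2⟩⟩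
    · rintro _ ⟨s, hs, rfl⟩ _ ⟨s', hs', rfl⟩
      linarith [h s hs.1 s' hs'.1 hs.2.1 hs.2.2 hs'.2.1 hs'.2.2]
  obtain ⟨L, hL⟩ := CompleteSpace.complete hC
  refine ⟨L, fun ε hε => ?_⟩
  obtain ⟨a, ha, ha0, h⟩ := key (ε/2) (by linarith)
  refine ⟨a, ha, ha0, fun s ms q1 q2 => ?_⟩
  have hL' : Tendsto x (𝓝[auxD T ∩ Ico 0 t] t) (𝓝 L) := hL
  refine le_of_tendsto (tendsto_const_nhds.dist hL') ?_
  rw [eventually_iff_exists_mem]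
  refine ⟨Ioi a ∩ (auxD T ∩ Ico 0 t), ?_, fun s' hs' => ?_⟩
  · rw [mem_nhdsWithin]
    exact ⟨Ioi a, isOpen_Ioi, ha, fun s hs => hs⟩
  · linarith [h s ms s' hs'.2.1 q1 q2 hs'.1 hs'.2.2.2]

lemma aux_right {E : Type*} [MetricSpace E] [CompleteSpace E] (T : ℝ) (hT : 0 < T) (x : ℝ → E)
    (H : ∀ ε > 0, ∃ η > 0, ∀ s1 ∈ auxD T, ∀ s2 ∈ auxD T, ∀ s3 ∈ auxD T, s1 ≤ s2 → s2 ≤ s3 →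
      s3 - s1 ≤ η → min (dist (x s1) (x s2)) (dist (x s2) (x s3)) ≤ ε)
    (t : ℝ) (ht : t ∈ Ico 0 T) :
    ∃ L, ∀ ε > 0, ∃ b > t, b ≤ T ∧ ∀ s ∈ auxD T, t < s → s < b → dist (x s) L ≤ ε := by
  have hrefl : ∀ s ∈ auxD T, T - s ∈ auxD T := by
    rintro s ⟨n, k, hk, rfl⟩
    refine ⟨n, 2^n - k, by omega, ?_⟩
    rw [Nat.cast_sub hk]; push_cast; field_simp
  obtain ⟨L, hL⟩ := aux_left T hT (fun s => x (T - s)) (fun ε hε => by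
    obtain ⟨η, hη, h⟩ := H ε hε
    refine ⟨η, hη, fun s1 m1 s2 m2 s3 m3 h12 h23 h13 => ?_⟩
    have := h _ (hrefl _ m3) _ (hrefl _ m2) _ (hrefl _ m1) (by linarith) (by linarith)
      (by linarith)
    rw [min_comm, dist_comm (x (T - s1)), dist_comm (x (T - s2))]
    exact this) (T - t) ⟨by linarith [ht.2], by linarith [ht.1]⟩
  refine ⟨L, fun ε hε => ?_⟩
  obtain ⟨a, ha, ha0, h⟩ := hL ε hε
  refine ⟨T - a, by linarith, by linarith, fun s ms q1 q2 => ?_⟩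
  have := h (T - s) (hrefl _ ms) (by linarith) (by linarith)
  simpa using this

/-- deterministic conclusion -/
lemma aux_cadlag {E : Type*} [MetricSpace E] [CompleteSpace E] (T : ℝ) (hT : 0 < T) (x : ℝ → E)
    (H : ∀ ε > 0, ∃ η > 0, ∀ s1 ∈ auxD T, ∀ s2 ∈ auxD T, ∀ s3 ∈ auxD T, s1 ≤ s2 → s2 ≤ s3 →
      s3 - s1 ≤ η → min (dist (x s1) (x s2)) (dist (x s2) (x s3)) ≤ ε) :
    ∃ z : ℝ → E, (∀ t ∈ Ico (0 : ℝ) T, Tendsto z (𝓝[Ioc t T] t) (𝓝 (z t))) ∧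
      (∀ t ∈ Ioc (0 : ℝ) T, ∃ L : E, Tendsto z (𝓝[Ico 0 t] t) (𝓝 L)) ∧
      z T = x T ∧
      (∀ t ∈ Ico (0 : ℝ) T, ∀ ε > 0, ∃ b > t, b ≤ T ∧
        ∀ s ∈ auxD T, t < s → s < b → dist (x s) (z t) ≤ ε) := by
  classical
  have : Nonempty E := ⟨x 0⟩
  choose! L hL using aux_right T hT x H
  set z : ℝ → E := fun t => if t < T then L t else x T with hz
  have hzL : ∀ t ∈ Ico (0 : ℝ) T, z t = L t := fun t ht => by simp [hz, ht.2]
  have hz' : ∀ t ∈ Ico (0 : ℝ) T, ∀ ε > 0, ∃ b > t, b ≤ T ∧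
        ∀ s ∈ auxD T, t < s → s < b → dist (x s) (z t) ≤ ε := by
    intro t ht; rw [hzL t ht]; exact hL t ht
  -- transfer
  have tr : ∀ a b : ℝ, 0 ≤ a → b ≤ T → ∀ (M : E) (ε : ℝ), 0 < ε →
      (∀ s ∈ auxD T, a < s → s < b → dist (x s) M ≤ ε) →
      ∀ t, a ≤ t → t < b → dist (z t) M ≤ 2 * ε := by
    intro a b ha hb M ε hε h t hat htb
    obtain ⟨b', hb', _, h'⟩ := hz' t ⟨by linarith, by linarith⟩ ε hε
    obtain ⟨s, ms, q1, q2⟩ := auxD_dense hT (by linarith : 0 ≤ t) (lt_min htb hb')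
      ((min_le_left _ _).trans hb)
    have := lt_min_iff.1 q2
    have := dist_triangle_left (z t) M (x s)
    linarith [h s ms (by linarith) (by linarith), h' s ms q1 (by linarith)]
  refine ⟨z, fun t ht => ?_, fun t ht => ?_, by simp [hz], hz'⟩
  · rw [Metric.tendsto_nhds]
    intro ε hε
    obtain ⟨b, hb, hbT, h⟩ := hz' t ht (ε/4) (by linarith)
    rw [eventually_iff_exists_mem]
    refine ⟨Iio b ∩ Ioc t T, mem_nhdsWithin.2 ⟨Iio b, isOpen_Iio, hb, fun s hs => hs⟩, fun s hs => ?_⟩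
    linarith [tr t b ht.1 hbT _ _ (by linarith) h s hs.2.1.le hs.1]
  · obtain ⟨M, hM⟩ := aux_left T hT x H t ht
    refine ⟨M, ?_⟩
    rw [Metric.tendsto_nhds]
    intro ε hε
    obtain ⟨a, ha, ha0, h⟩ := hM (ε/4) (by linarith)
    rw [eventually_iff_exists_mem]
    refine ⟨Ioi a ∩ Ico 0 t, mem_nhdsWithin.2 ⟨Ioi a, isOpen_Ioi, ha, fun s hs => hs⟩,
      fun s hs => ?_⟩
    linarith [tr a t ha0 ht.2 _ _ (by linarith) h s (le_of_lt hs.1) hs.2.2]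

lemma aux_max {Ξ : Type*} [MeasurableSpace Ξ] (Q : Measure Ξ) [IsProbabilityMeasure Q]
    (N : ℕ) (hN : 0 < N) (f : ℕ → Ξ → ENNReal) (hf : ∀ k, Measurable (f k))
    (c : ℝ) (hc : 0 ≤ c) (θ : ℝ → ℝ) (R : ℝ) (hR : 1 ≤ R)
    (hθmono : MonotoneOn θ (Set.Icc 0 R))
    (hθnonneg : ∀ u ∈ Set.Icc (0 : ℝ) R, 0 ≤ θ u)
    (hθconcave : ConcaveOn ℝ (Set.Icc 0 R) θ)
    (h : ∀ k, ∀ A : Set Ξ, MeasurableSet A →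
      ∫⁻ ω in A, f k ω ∂Q ≤ ENNReal.ofReal (c * θ (Q A).toReal)) :
    ∫⁻ ω, (Finset.range N).sup (fun k => f k ω) ∂Q ≤ ENNReal.ofReal (c * (N * θ (1 / N))) := by
  classical
  set A : ℕ → Set Ξ := fun k => {ω | (∀ j < N, f j ω ≤ f k ω) ∧ ∀ j < k, f j ω < f k ω} with hA
  have hAm : ∀ k, MeasurableSet (A k) := by
    intro k
    have e : A k = (⋂ j, ⋂ (_ : j < N), {ω | f j ω ≤ f k ω}) ∩
        (⋂ j, ⋂ (_ : j < k), {ω | f j ω < f k ω}) := by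
      ext ω; simp [hA]
    rw [e]
    exact (MeasurableSet.iInter fun j => MeasurableSet.iInter fun _ =>
      measurableSet_le (hf j) (hf k)).inter (MeasurableSet.iInter fun j =>
      MeasurableSet.iInter fun _ => measurableSet_lt (hf j) (hf k))
  have hdisj : ((Finset.range N : Finset ℕ) : Set ℕ).PairwiseDisjoint A := by
    have aux : ∀ i j, i < N → j < N → i < j → Disjoint (A i) (A j) := by
      intro i j hi hj hij
      rw [Set.disjoint_left]
      intro ω h1 h2
      exact absurd (h1.1 j hj) (not_le.2 (h2.2 i hij))
    intro i hi j hj hij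
    simp only [Finset.coe_range, mem_Iio] at hi hj
    rcases lt_or_gt_of_ne hij with hl | hl
    · exact aux i j hi hj hl
    · exact (aux j i hj hi hl).symm
  have hpt : ∀ ω, (Finset.range N).sup (fun k => f k ω) ≤
      ∑ k ∈ Finset.range N, (A k).indicator (f k) ω := by
    intro ω
    have hex : ∃ k, k < N ∧ ∀ j < N, f j ω ≤ f k ω := by
      obtain ⟨k, hk, hk'⟩ := Finset.exists_max_image (Finset.range N) (fun k => f k ω)
        ⟨0, by simpa using hN⟩
      exact ⟨k, by simpa using hk, fun j hj => hk' j (by simpa using hj)⟩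
    obtain ⟨h1, h2⟩ := Nat.find_spec hex
    set k := Nat.find hex with hk
    have hmem : ω ∈ A k := by
      refine ⟨h2, fun j hj => ?_⟩
      have hmin := Nat.find_min hex hj
      by_contra hcon
      exact hmin ⟨hj.trans h1, fun i hi => (h2 i hi).trans (not_lt.1 hcon)⟩
    calc _ ≤ f k ω := Finset.sup_le fun j hj => h2 j (by simpa using hj)
      _ = (A k).indicator (f k) ω := by rw [indicator_of_mem hmem]
      _ ≤ _ := Finset.single_le_sum (f := fun k => (A k).indicator (f k) ω)
        (fun _ _ => zero_le) (by simpa using h1)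
  have hsum : ∑ k ∈ Finset.range N, (Q (A k)).toReal ≤ 1 := by
    have := measure_biUnion_finset (μ := Q) hdisj (fun k _ => hAm k)
    rw [← ENNReal.toReal_sum (fun _ _ => measure_ne_top _ _), ← this]
    simpa using ENNReal.toReal_mono ENNReal.one_ne_top prob_le_one
  have hq : ∀ k, (Q (A k)).toReal ∈ Icc 0 R := fun k =>
    ⟨ENNReal.toReal_nonneg, le_trans (by
      simpa using ENNReal.toReal_mono ENNReal.one_ne_top (prob_le_one (μ := Q) (s := A k))) hR⟩
  have hN' : (0:ℝ) < N := by exact_mod_cast hN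
  have hN1 : (1:ℝ) ≤ N := by exact_mod_cast hN
  have hJ : ∑ k ∈ Finset.range N, θ (Q (A k)).toReal ≤ N * θ (1 / N) := by
    have := hθconcave.le_map_sum (t := Finset.range N) (w := fun _ => 1 / (N:ℝ))
      (p := fun k => (Q (A k)).toReal) (fun _ _ => by positivity) (by simp; field_simp)
      (fun k _ => hq k)
    simp only [smul_eq_mul, ← Finset.mul_sum] at this
    have hs0 : 0 ≤ ∑ k ∈ Finset.range N, (Q (A k)).toReal :=
      Finset.sum_nonneg fun k _ => (hq k).1
    have hle : 1 / (N:ℝ) * ∑ k ∈ Finset.range N, (Q (A k)).toReal ≤ 1 / N := by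
      have : 0 ≤ 1 / (N:ℝ) := by positivity
      nlinarith
    have hi : 1 / (N:ℝ) ≤ R := le_trans (by rw [div_le_one hN']; exact hN1) hR
    have := this.trans (hθmono ⟨by positivity, hle.trans hi⟩ ⟨by positivity, hi⟩ hle)
    rw [div_mul_eq_mul_div, one_mul, div_le_iff₀ hN'] at this
    linarith
  calc _ ≤ ∫⁻ ω, ∑ k ∈ Finset.range N, (A k).indicator (f k) ω ∂Q := lintegral_mono hpt
    _ = ∑ k ∈ Finset.range N, ∫⁻ ω in A k, f k ω ∂Q := by
      rw [lintegral_finsetSum _ fun k _ => (hf k).indicator (hAm k)]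
      exact Finset.sum_congr rfl fun k _ => lintegral_indicator (hAm k) _
    _ ≤ ∑ k ∈ Finset.range N, ENNReal.ofReal (c * θ (Q (A k)).toReal) :=
      Finset.sum_le_sum fun k _ => h k _ (hAm k)
    _ = ENNReal.ofReal (c * ∑ k ∈ Finset.range N, θ (Q (A k)).toReal) := by
      rw [Finset.mul_sum, ENNReal.ofReal_sum_of_nonneg]
      exact fun k _ => mul_nonneg hc (hθnonneg _ (hq k))
    _ ≤ _ := ENNReal.ofReal_le_ofReal (mul_le_mul_of_nonneg_left hJ hc)

lemma aux_series (T : ℝ) (hT : 0 < T) (δ θ : ℝ → ℝ)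
    (hδmono : MonotoneOn δ (Set.Icc 0 T))
    (hδnonneg : ∀ u ∈ Set.Icc (0 : ℝ) T, 0 ≤ δ u)
    (hθmono : MonotoneOn θ (Set.Icc 0 (max T 1)))
    (hθ0 : θ 0 = 0) (hθnonneg : ∀ u ∈ Set.Icc (0 : ℝ) (max T 1), 0 ≤ θ u)
    (hθconcave : ConcaveOn ℝ (Set.Icc 0 (max T 1)) θ)
    (hint : ∫⁻ u in Set.Ioc (0 : ℝ) T, ENNReal.ofReal (δ u * θ u / u ^ 2) < ⊤) :
    ∑' m : ℕ, ENNReal.ofReal (δ (2 * T / 2^(m+2)) *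
      ((2^(m+2) : ℕ) * θ (1 / (2^(m+2) : ℕ)))) ≠ ⊤ := by
  set c : ℝ := min 1 (2 * T) with hc
  have hc0 : 0 < c := lt_min one_pos (by linarith)
  set K : ℝ := 8 * T / c with hK
  have hK0 : 0 < K := by positivity
  set I : ℕ → Set ℝ := fun m => Ioc (T / 2^(m+1)) (T / 2^m) with hI
  have hdisj : Pairwise (Function.onFun Disjoint I) := by
    have aux : ∀ i j, i < j → Disjoint (I i) (I j) := by
      intro i j hij
      rw [Set.disjoint_left]
      rintro u ⟨h1, h2⟩ ⟨h3, h4⟩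
      have : T / 2^j ≤ T / 2^(i+1) := by
        gcongr
        · norm_num
        · omega
      linarith
    intro i j hij
    rcases lt_or_gt_of_ne hij with hl | hl
    · exact aux i j hl
    · exact (aux j i hl).symm
  have hsub : (⋃ m, I m) ⊆ Ioc 0 T := by
    refine iUnion_subset fun m u hu => ⟨lt_trans (by positivity) hu.1, hu.2.trans ?_⟩
    exact div_le_self hT.le (one_le_pow₀ (by norm_num))
  have hterm : ∀ m : ℕ, ENNReal.ofReal (δ (2 * T / 2^(m+2)) *
      ((2^(m+2) : ℕ) * θ (1 / (2^(m+2) : ℕ)))) ≤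
      ENNReal.ofReal K * ∫⁻ u in I m, ENNReal.ofReal (δ u * θ u / u ^ 2) := by
    intro m
    set P : ℝ := 2^m with hP
    have hP0 : 1 ≤ P := one_le_pow₀ (by norm_num)
    have e1 : (2:ℝ)^(m+1) = 2 * P := by rw [pow_succ]; ring
    have e2 : (2:ℝ)^(m+2) = 4 * P := by rw [pow_add]; ring
    have e3 : 2 * T / (4 * P) = T / (2 * P) := by field_simp; norm_num
    push_cast
    rw [e2, e3]
    set a := T / (2 * P) with ha
    have ha0 : 0 < a := by positivity
    have haT : 2 * a ≤ T := by
      have : 2 * a = T / P := by rw [ha]; field_simp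
      rw [this]; exact div_le_self hT.le hP0
    have hb : 0 < 1 / (4 * P) := by positivity
    have hb1 : 1 / (4 * P) ≤ 1 := by rw [div_le_one (by positivity)]; linarith
    have hab : a = (2 * T) * (1 / (4 * P)) := by rw [ha]; field_simp; norm_num
    have hbm : 1 / (4 * P) ∈ Icc 0 (max T 1) := ⟨hb.le, hb1.trans (le_max_right _ _)⟩
    have ham : a ∈ Icc 0 (max T 1) := ⟨ha0.le, by linarith [le_max_left T 1]⟩
    have hθa : c * θ (1 / (4 * P)) ≤ θ a := by
      have h1 : c * θ (1 / (4 * P)) ≤ θ (c * (1 / (4 * P))) := by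
        have := hθconcave.2 hbm (left_mem_Icc.2 (hbm.1.trans hbm.2)) hc0.le
          (sub_nonneg.2 (min_le_left 1 (2*T))) (by ring)
        simpa [hθ0] using this
      have h2 : c * (1 / (4 * P)) ≤ a := by
        rw [hab]; exact mul_le_mul_of_nonneg_right (min_le_right _ _) hb.le
      exact h1.trans (hθmono ⟨by positivity, h2.trans ham.2⟩ ham h2)
    have hδa : 0 ≤ δ a := hδnonneg a ⟨ha0.le, by linarith⟩
    have hlow : ∀ u ∈ I m, ENNReal.ofReal (δ a * (c * θ (1 / (4 * P))) / (2 * a)^2) ≤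
        ENNReal.ofReal (δ u * θ u / u ^ 2) := by
      intro u hu
      have hu1 : a < u := by have := hu.1; rwa [e1] at this
      have hu2 : u ≤ 2 * a := by
        have : 2 * a = T / P := by rw [ha]; field_simp
        rw [this]; exact hu.2
      have hum : u ∈ Icc 0 (max T 1) := ⟨by linarith, by linarith [le_max_left T 1]⟩
      apply ENNReal.ofReal_le_ofReal
      have g1 : δ a ≤ δ u := hδmono ⟨ha0.le, by linarith⟩ ⟨by linarith, by linarith⟩ hu1.le
      have g2 : c * θ (1 / (4 * P)) ≤ θ u := hθa.trans (hθmono ham hum hu1.le)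
      have g3 : 0 ≤ θ (1 / (4 * P)) := hθnonneg _ hbm
      have g4 : 0 < u := by linarith
      have g5 := hθnonneg _ hum
      have g6 : 0 ≤ δ u := hδa.trans g1
      gcongr
    have hconst := setLIntegral_mono' (μ := volume) (s := I m) measurableSet_Ioc hlow
    rw [setLIntegral_const] at hconst
    have hvol : volume (I m) = ENNReal.ofReal a := by
      rw [hI]; simp only [Real.volume_Ioc]
      congr 1; rw [e1, ha, ← hP]; field_simp; norm_num
    rw [hvol] at hconst
    refine le_trans ?_ (mul_le_mul_right hconst (ENNReal.ofReal K))
    have g3 : 0 ≤ θ (1 / (4 * P)) := hθnonneg _ hbm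
    rw [← ENNReal.ofReal_mul (by positivity), ← ENNReal.ofReal_mul hK0.le]
    apply ENNReal.ofReal_le_ofReal
    apply le_of_eq
    rw [hK]
    have hT0 := hT.ne'
    have hc1 := hc0.ne'
    have hP1 : P ≠ 0 := by positivity
    have ha1 := ha0.ne'
    have h4P : 4 * P = 2 * T / a := by rw [ha]; field_simp; norm_num
    generalize θ (1 / (4 * P)) = y
    rw [h4P]
    field_simp
    ring
  refine ne_top_of_le_ne_top ?_ (ENNReal.tsum_le_tsum hterm)
  rw [ENNReal.tsum_mul_left, ← lintegral_iUnion (fun m => measurableSet_Ioc) hdisj]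
  refine ENNReal.mul_ne_top ENNReal.ofReal_ne_top ?_
  exact ((lintegral_mono_set hsub).trans_lt hint).ne

/-- **Theorem (càdlàg modification criterion, Bezandry–Fernique type).**
Let `(Ξ, 𝒢, ℚ)` be a complete probability space, `(E, Δ)` a complete metric space,
`T > 0`, and `X = (X_t)_{t∈[0,T]}` a family of functions `X_t : Ξ → E` such that
`ω ↦ dist (X s ω) (X t ω)` is measurable for all `s, t ∈ [0,T]` and `X` is continuous
in probability.  If there exist continuous increasing `δ : [0,T] → [0,∞)` and concave
continuous increasing `θ : [0, T ∨ 1] → [0,∞)` with `δ 0 = θ 0 = 0` such that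
`E[min(Δ(X_s,X_t), Δ(X_t,X_u)) ⬝ 1_A] ≤ δ(u−s)·θ(ℚ A)` for all `0 ≤ s ≤ t ≤ u ≤ T`
and `A ∈ 𝒢`, and `∫₀^T u⁻² δ(u) θ(u) du < ∞`, then `X` has a càdlàg modification. -/
theorem cadlag_modification
    {Ξ : Type*} [MeasurableSpace Ξ] (Q : Measure Ξ) [IsProbabilityMeasure Q]
    (hQcomplete : Q.IsComplete)
    {E : Type*} [MetricSpace E] [CompleteSpace E]
    (T : ℝ) (hT : 0 < T)
    (X : ℝ → Ξ → E)
    (hmeas : ∀ s ∈ Set.Icc (0 : ℝ) T, ∀ t ∈ Set.Icc (0 : ℝ) T,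
      Measurable fun ω => dist (X s ω) (X t ω))
    (hcontP : ∀ t ∈ Set.Icc (0 : ℝ) T, ∀ ε > (0 : ℝ),
      Tendsto (fun s => Q {ω | ε < dist (X s ω) (X t ω)})
        (nhdsWithin t (Set.Icc (0 : ℝ) T)) (nhds 0))
    (δ θ : ℝ → ℝ)
    (hδcont : ContinuousOn δ (Set.Icc 0 T)) (hδmono : MonotoneOn δ (Set.Icc 0 T))
    (hδ0 : δ 0 = 0) (hδnonneg : ∀ u ∈ Set.Icc (0 : ℝ) T, 0 ≤ δ u)
    (hθcont : ContinuousOn θ (Set.Icc 0 (max T 1)))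
    (hθmono : MonotoneOn θ (Set.Icc 0 (max T 1)))
    (hθ0 : θ 0 = 0) (hθnonneg : ∀ u ∈ Set.Icc (0 : ℝ) (max T 1), 0 ≤ θ u)
    (hθconcave : ConcaveOn ℝ (Set.Icc 0 (max T 1)) θ)
    (hineq : ∀ s t u : ℝ, 0 ≤ s → s ≤ t → t ≤ u → u ≤ T →
      ∀ A : Set Ξ, MeasurableSet A →
        ∫⁻ ω in A,
            ENNReal.ofReal (min (dist (X s ω) (X t ω)) (dist (X t ω) (X u ω))) ∂Q
          ≤ ENNReal.ofReal (δ (u - s) * θ (Q A).toReal))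
    (hint : ∫⁻ u in Set.Ioc (0 : ℝ) T, ENNReal.ofReal (δ u * θ u / u ^ 2) < ⊤) :
    ∃ X' : ℝ → Ξ → E,
      (∀ ω : Ξ,
        (∀ t ∈ Set.Ico (0 : ℝ) T,
          Tendsto (fun s => X' s ω) (nhdsWithin t (Set.Ioc t T)) (nhds (X' t ω))) ∧
        (∀ t ∈ Set.Ioc (0 : ℝ) T, ∃ L : E,
          Tendsto (fun s => X' s ω) (nhdsWithin t (Set.Ico 0 t)) (nhds L))) ∧
      (∀ t ∈ Set.Icc (0 : ℝ) T, ∀ᵐ ω ∂Q, dist (X t ω) (X' t ω) = 0) := by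
  classical
  set f : ℕ → ℕ → Ξ → ENNReal := fun n k ω => if k + 2 ≤ 2^n then
    ENNReal.ofReal (min (dist (X (k*T/2^n) ω) (X ((k+1 : ℕ)*T/2^n) ω))
       (dist (X ((k+1 : ℕ)*T/2^n) ω) (X ((k+2 : ℕ)*T/2^n) ω))) else 0 with hf
  have hmemD : ∀ n k : ℕ, k ≤ 2^n → (k:ℝ)*T/2^n ∈ Icc 0 T := fun n k hk =>
    auxD_mem hT ⟨n, k, hk, rfl⟩
  have hfm : ∀ n k, Measurable (f n k) := by
    intro n k
    by_cases h : k + 2 ≤ 2^n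
    · simp only [hf, h, if_true]
      exact ((hmeas _ (hmemD n k (by omega)) _ (hmemD n (k+1) (by omega))).min
        (hmeas _ (hmemD n (k+1) (by omega)) _ (hmemD n (k+2) (by omega)))).ennreal_ofReal
    · simp only [hf, h, if_false]
      exact measurable_const
  set V : ℕ → Ξ → ENNReal := fun n ω => (Finset.range (2^n)).sup (fun k => f n k ω) with hV
  have hVm : ∀ n, Measurable (V n) := fun n => by
    simp only [hV, Finset.sup_eq_iSup]
    exact Measurable.iSup fun k => Measurable.iSup fun _ => hfm n k
  have hVtop : ∀ n ω, V n ω < ⊤ := by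
    intro n ω
    rw [hV]
    refine (Finset.sup_lt_iff (by simp)).2 fun k _ => ?_
    simp only [hf]
    split_ifs <;> simp
  have hVint : ∀ m, ∫⁻ ω, V (m+2) ω ∂Q ≤ ENNReal.ofReal (δ (2 * T / 2^(m+2)) *
      ((2^(m+2) : ℕ) * θ (1 / (2^(m+2) : ℕ)))) := by
    intro m
    have hm0 : 0 ≤ 2 * T / 2^(m+2) := by positivity
    have hmT : 2 * T / 2^(m+2) ≤ T := by
      rw [div_le_iff₀ (by positivity), pow_add]
      have : (1:ℝ) ≤ 2^m := one_le_pow₀ (by norm_num)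
      nlinarith
    have hδm := hδnonneg _ ⟨hm0, hmT⟩
    refine aux_max Q (2^(m+2)) (by positivity) (f (m+2)) (hfm _) _ hδm θ _
      (le_max_right T 1) hθmono hθnonneg hθconcave ?_
    intro k A hA
    by_cases h : k + 2 ≤ 2^(m+2)
    · simp only [hf, h, if_true]
      have := hineq (k*T/2^(m+2)) ((k+1 : ℕ)*T/2^(m+2)) ((k+2 : ℕ)*T/2^(m+2))
        (hmemD _ k (by omega)).1 (by gcongr; omega) (by gcongr; omega) (hmemD _ (k+2) h).2 A hA
      have e : ((k+2 : ℕ):ℝ)*T/2^(m+2) - k*T/2^(m+2) = 2 * T / 2^(m+2) := by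
        push_cast; ring
      rwa [e] at this
    · simp [hf, h]
  have hser := aux_series T hT δ θ hδmono hδnonneg hθmono hθ0 hθnonneg hθconcave hint
  have hae : ∀ᵐ ω ∂Q, ∑' m, V (m+2) ω < ⊤ := by
    refine ae_lt_top' (Measurable.tsum fun m => hVm (m+2)).aemeasurable ?_
    rw [lintegral_tsum fun m => (hVm (m+2)).aemeasurable]
    exact ne_top_of_le_ne_top hser (ENNReal.tsum_le_tsum hVint)
  have hgood : ∀ ω, ∑' m, V (m+2) ω < ⊤ → ∃ z : ℝ → E,
      (∀ t ∈ Ico (0 : ℝ) T, Tendsto z (𝓝[Ioc t T] t) (𝓝 (z t))) ∧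
      (∀ t ∈ Ioc (0 : ℝ) T, ∃ L : E, Tendsto z (𝓝[Ico 0 t] t) (𝓝 L)) ∧
      z T = X T ω ∧
      (∀ t ∈ Ico (0 : ℝ) T, ∀ ε > 0, ∃ b > t, b ≤ T ∧
        ∀ s ∈ auxD T, t < s → s < b → dist (X s ω) (z t) ≤ ε) := by
    intro ω hω
    refine aux_cadlag T hT (fun t => X t ω) (aux_modulus T hT (fun t => X t ω)
      (fun n => (V n ω).toReal) (fun n => ENNReal.toReal_nonneg) ?_ ?_)
    · rw [← summable_nat_add_iff 2]
      exact ENNReal.summable_toReal hω.ne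
    · intro n k hk
      have h1 : f n k ω ≤ V n ω :=
        Finset.le_sup (f := fun k => f n k ω) (Finset.mem_range.2 (by omega))
      simp only [hf, hk, if_true] at h1
      exact (ENNReal.ofReal_le_iff_le_toReal (hVtop n ω).ne).1 h1
  obtain ⟨ω₀⟩ : Nonempty Ξ := Q.nonempty_of_neZero
  have hchoice : ∀ ω, ∃ z : ℝ → E,
      ((∀ t ∈ Ico (0 : ℝ) T, Tendsto z (𝓝[Ioc t T] t) (𝓝 (z t))) ∧
      (∀ t ∈ Ioc (0 : ℝ) T, ∃ L : E, Tendsto z (𝓝[Ico 0 t] t) (𝓝 L))) ∧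
      (∑' m, V (m+2) ω < ⊤ → z T = X T ω ∧
      (∀ t ∈ Ico (0 : ℝ) T, ∀ ε > 0, ∃ b > t, b ≤ T ∧
        ∀ s ∈ auxD T, t < s → s < b → dist (X s ω) (z t) ≤ ε)) := by
    intro ω
    by_cases h : ∑' m, V (m+2) ω < ⊤
    · obtain ⟨z, h1, h2, h3⟩ := hgood ω h
      exact ⟨z, ⟨h1, h2⟩, fun _ => h3⟩
    · exact ⟨fun _ => X 0 ω₀, ⟨fun _ _ => tendsto_const_nhds,
        fun _ _ => ⟨X 0 ω₀, tendsto_const_nhds⟩⟩, fun h' => absurd h' h⟩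
  choose z hz1 hz2 using hchoice
  refine ⟨fun t ω => z ω t, hz1, fun t ht => ?_⟩
  rcases ht.2.eq_or_lt with rfl | htT
  · filter_upwards [hae] with ω hω
    rw [(hz2 ω hω).1, dist_self]
  have hseq : ∀ n : ℕ, ∃ s ∈ auxD T, t < s ∧ s < min T (t + 1 / (n + 1)) := fun n =>
    auxD_dense hT ht.1 (lt_min htT (by have : (0:ℝ) < 1 / (n+1) := by positivity
                                       linarith)) (min_le_left _ _)
  choose s hsD hst hs using hseq
  have hslim : Tendsto s atTop (𝓝 t) := by
    have h1 : Tendsto (fun n : ℕ => t + 1 / ((n:ℝ) + 1)) atTop (𝓝 (t + 0)) :=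
      tendsto_const_nhds.add tendsto_one_div_add_atTop_nhds_zero_nat
    rw [add_zero] at h1
    exact tendsto_of_tendsto_of_tendsto_of_le_of_le tendsto_const_nhds h1
      (fun n => (hst n).le) (fun n => ((hs n).le.trans (min_le_right _ _)))
  have hslim' : Tendsto s atTop (𝓝[Icc 0 T] t) :=
    tendsto_nhdsWithin_iff.2 ⟨hslim, Eventually.of_forall fun n => auxD_mem hT (hsD n)⟩
  have hTM : TendstoInMeasure Q (fun n ω => dist (X (s n) ω) (X t ω)) atTop (fun _ => (0:ℝ)) := by
    rw [tendstoInMeasure_iff_dist]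
    intro ε hε
    have h := (hcontP t ht (ε/2) (half_pos hε)).comp hslim'
    refine tendsto_of_tendsto_of_tendsto_of_le_of_le tendsto_const_nhds h
      (fun _ => zero_le) (fun n => measure_mono fun ω hω => ?_)
    simp only [Set.mem_ofPred_eq, dist_zero_right, Real.norm_eq_abs, abs_dist] at hω ⊢
    linarith
  obtain ⟨ns, hns, hlim⟩ := hTM.exists_seq_tendsto_ae
  filter_upwards [hae, hlim] with ω hω hl
  have hzt := (hz2 ω hω).2 t ⟨ht.1, htT⟩
  refine le_antisymm (le_of_forall_pos_le_add fun ε hε => ?_) dist_nonneg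
  obtain ⟨b, hb, _, h⟩ := hzt (ε/2) (half_pos hε)
  have ev1 := (hslim.comp hns.tendsto_atTop).eventually_lt_const hb
  have ev2 := hl.eventually_lt_const (half_pos hε)
  obtain ⟨i, h1, h2⟩ := (ev1.and ev2).exists
  have h3 := h _ (hsD (ns i)) (hst _) h1
  have := dist_triangle_left (X t ω) (z ω t) (X (s (ns i)) ω)
  linarith
end

section
/- Let (Ξ, 𝒢, ℚ) be a complete probability space, (E, Δ) a complete metric space, T > 0, and X = (X_t)_{t∈[0,T]} a family of functions X_t: Ξ → E such that ω ↦ Δ(X_s(ω), X_t(ω)) is 𝒢-measurable for all s, t ∈ [0,T] and X is continuous in probability. If there exist q > 1/2, r > 0 and C > 0 such that E_ℚ[Δ(X_s, X_t)^q · Δ(X_t, X_u)^q] ≤ C |u−s|^{1+r} for all 0 ≤ s ≤ t ≤ u ≤ T, then X has a càdlàg modification, i.e. a family X′ = (X′_t)_{t∈[0,T]} such that every path t ↦ X′_t(ω) is right-continuous with left limits on [0,T] and, for each t ∈ [0,T], Δ(X_t, X′_t) = 0 ℚ-a.s. -/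
open MeasureTheory Filter Set Topology

/-- dyadic nonnegative reals -/
def dyadSet : Set ℝ := {x | ∃ n k : ℕ, x = (k : ℝ) / 2 ^ n}

lemma dyad_one_step {E : Type*} [MetricSpace E] (z : ℝ → E) (c : ℝ) (hc : 0 ≤ c) (m : ℕ)
    (H : ∀ k : ℕ, min (dist (z ((k : ℝ) / 2 ^ (m+1))) (z (((k : ℝ) + 1) / 2 ^ (m+1))))
      (dist (z (((k : ℝ) + 1) / 2 ^ (m+1))) (z (((k : ℝ) + 2) / 2 ^ (m+1)))) ≤ c) :
    ∃ φ : ℕ → ℕ, Monotone φ ∧ ∀ p : ℕ,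
      dist (z ((p : ℝ) / 2 ^ (m+1))) (z ((φ p : ℝ) / 2 ^ m)) ≤ c ∧
      p ≤ 2 * φ p + 1 ∧ 2 * φ p ≤ p + 1 := by
  have key : ∀ p : ℕ, ∃ a : ℕ, dist (z ((p : ℝ) / 2 ^ (m+1))) (z ((a : ℝ) / 2 ^ m)) ≤ c ∧
      p ≤ 2 * a + 1 ∧ 2 * a ≤ p + 1 := by
    intro p
    have e : ∀ a : ℝ, (2 * a) / 2 ^ (m+1) = a / 2 ^ m := by
      intro a; rw [pow_succ]; field_simp
    rcases Nat.even_or_odd' p with ⟨k, rfl | rfl⟩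
    · refine ⟨k, ?_, by omega, by omega⟩
      push_cast
      rw [e, dist_self]; exact hc
    · have h := H (2 * k)
      push_cast at h ⊢
      rcases min_le_iff.1 h with h | h
      · refine ⟨k, ?_, by omega, by omega⟩
        rw [e, dist_comm] at h; exact h
      · refine ⟨k + 1, ?_, by omega, by omega⟩
        rw [show (2 * (k : ℝ) + 2) = 2 * (k + 1) by ring, e] at h
        push_cast; exact h
  choose φ hφ using key
  refine ⟨φ, monotone_nat_of_le_succ fun p => ?_, hφ⟩
  have h1 := (hφ p).2
  have h2 := (hφ (p+1)).2
  omega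

lemma dyad_chain {E : Type*} [MetricSpace E] (z : ℝ → E) (θ : ℝ) (h0 : 0 < θ) (h1 : θ < 1)
    (N : ℕ)
    (H : ∀ n ≥ N, ∀ k : ℕ, min (dist (z ((k : ℝ) / 2 ^ n)) (z (((k : ℝ) + 1) / 2 ^ n)))
      (dist (z (((k : ℝ) + 1) / 2 ^ n)) (z (((k : ℝ) + 2) / 2 ^ n))) ≤ θ ^ n)
    (n : ℕ) (hn : N ≤ n) (j : ℕ) :
    ∃ φ : ℕ → ℕ, Monotone φ ∧ ∀ p : ℕ,
      dist (z ((p : ℝ) / 2 ^ (n+j))) (z ((φ p : ℝ) / 2 ^ n)) ≤ (θ ^ n - θ ^ (n+j)) / (1 - θ) ∧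
      p + 1 ≤ 2 ^ j * φ p + 2 ^ j ∧ 2 ^ j * φ p + 1 ≤ p + 2 ^ j := by
  induction j with
  | zero => exact ⟨id, monotone_id, fun p => by simp⟩
  | succ j ih =>
    obtain ⟨φ, hφ, h⟩ := ih
    obtain ⟨ψ, hψ, h'⟩ := dyad_one_step z (θ ^ (n+j+1)) (by positivity) (n+j)
      (H (n+j+1) (by omega))
    refine ⟨φ ∘ ψ, hφ.comp hψ, fun p => ?_⟩
    obtain ⟨a1, a2, a3⟩ := h (ψ p)
    obtain ⟨b1, b2, b3⟩ := h' p
    refine ⟨?_, ?_, ?_⟩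
    · refine (dist_triangle _ _ _).trans ((add_le_add b1 a1).trans ?_)
      have : 0 < 1 - θ := by linarith
      have hp : 0 < θ ^ (n + j) := by positivity
      rw [← add_assoc, pow_succ θ (n+j), ← sub_nonneg]
      have : (θ ^ n - θ ^ (n + j) * θ) / (1 - θ) - (θ ^ (n + j) * θ + (θ ^ n - θ ^ (n + j)) / (1 - θ))
        = θ ^ (n+j) * (1 - θ) := by field_simp; ring
      rw [this]; positivity
    · simp only [Function.comp, pow_succ]; lia
    · simp only [Function.comp, pow_succ]; lia

lemma dyad_level {x : ℝ} (hx : x ∈ dyadSet) :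
    ∃ n : ℕ, ∀ m ≥ n, ∃ k : ℕ, x = (k : ℝ) / 2 ^ m := by
  obtain ⟨n, k, rfl⟩ := hx
  refine ⟨n, fun m hm => ⟨k * 2 ^ (m - n), ?_⟩⟩
  obtain ⟨d, rfl⟩ := Nat.exists_eq_add_of_le hm
  push_cast
  rw [Nat.add_sub_cancel_left, pow_add, mul_div_mul_right _ _ (by positivity)]

lemma dyad_modulus {E : Type*} [MetricSpace E] (z : ℝ → E) (θ : ℝ) (h0 : 0 < θ) (h1 : θ < 1)
    (N : ℕ)
    (H : ∀ n ≥ N, ∀ k : ℕ, min (dist (z ((k : ℝ) / 2 ^ n)) (z (((k : ℝ) + 1) / 2 ^ n)))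
      (dist (z (((k : ℝ) + 1) / 2 ^ n)) (z (((k : ℝ) + 2) / 2 ^ n))) ≤ θ ^ n)
    (ε : ℝ) (hε : 0 < ε) :
    ∃ δ > 0, ∀ s ∈ dyadSet, ∀ t ∈ dyadSet, ∀ u ∈ dyadSet, s ≤ t → t ≤ u → u - s ≤ δ →
      dist (z s) (z t) ≤ ε ∨ dist (z t) (z u) ≤ ε := by
  have h2 : 0 < 1 - θ := by linarith
  obtain ⟨n, hn, hN⟩ : ∃ n, θ ^ n < ε * (1 - θ) / 3 ∧ N ≤ n := by
    have := (tendsto_pow_atTop_nhds_zero_of_lt_one h0.le h1).eventually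
      (gt_mem_nhds (show 0 < ε * (1 - θ) / 3 by positivity))
    exact (this.and (eventually_ge_atTop N)).exists
  refine ⟨1 / 2 ^ n, by positivity, ?_⟩
  intro s hs t ht u hu hst htu hus
  obtain ⟨n1, hs⟩ := dyad_level hs
  obtain ⟨n2, ht⟩ := dyad_level ht
  obtain ⟨n3, hu⟩ := dyad_level hu
  obtain ⟨a, rfl⟩ := hs (n + (n1 + n2 + n3)) (by omega)
  obtain ⟨b, rfl⟩ := ht (n + (n1 + n2 + n3)) (by omega)
  obtain ⟨c, rfl⟩ := hu (n + (n1 + n2 + n3)) (by omega)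
  generalize n1 + n2 + n3 = j at *
  clear hs ht hu
  obtain ⟨φ, hφ, h⟩ := dyad_chain z θ h0 h1 N H n hN j
  have hab : a ≤ b := by
    rw [div_le_div_iff_of_pos_right (by positivity)] at hst; exact_mod_cast hst
  have hbc : b ≤ c := by
    rw [div_le_div_iff_of_pos_right (by positivity)] at htu; exact_mod_cast htu
  have hca : c ≤ a + 2 ^ j := by
    rw [← sub_div, div_le_div_iff₀ (by positivity) (by positivity), pow_add] at hus
    have : (c : ℝ) - a ≤ 2 ^ j := by
      have h3 : (0:ℝ) < 2 ^ n := by positivity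
      nlinarith
    have : (c : ℝ) ≤ a + 2 ^ j := by linarith
    exact_mod_cast this
  obtain ⟨a1, a2, a3⟩ := h a
  obtain ⟨b1, b2, b3⟩ := h b
  obtain ⟨c1, c2, c3⟩ := h c
  have m1 := hφ hab
  have m2 := hφ hbc
  have hc2 : φ c ≤ φ a + 2 := by
    have : 2 ^ j * φ c < 2 ^ j * (φ a + 3) := by
      have : 2 ^ j * (φ a + 3) = 2 ^ j * φ a + 3 * 2 ^ j := by ring
      omega
    have := Nat.lt_of_mul_lt_mul_left this
    omega
  set κ := (θ ^ n - θ ^ (n+j)) / (1 - θ) with hκ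
  have hκ1 : κ ≤ θ ^ n / (1 - θ) := by
    rw [hκ]; gcongr; linarith [show 0 < θ ^ (n+j) by positivity]
  have hθn : θ ^ n ≤ θ ^ n / (1 - θ) := by
    rw [le_div_iff₀ h2]; nlinarith [show 0 < θ ^ n by positivity]
  have hfin : θ ^ n / (1 - θ) ≤ ε / 3 := by
    rw [div_le_iff₀ h2]; linarith
  have gen : ∀ x y x' y' : ℝ, dist (z x) (z x') ≤ κ → dist (z y) (z y') ≤ κ →
      dist (z x') (z y') ≤ θ ^ n → dist (z x) (z y) ≤ ε := by
    intro x y x' y' e1 e2 e3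
    have := dist_triangle4 (z x) (z x') (z y') (z y)
    rw [dist_comm (z y') (z y)] at this
    linarith
  have hθ0 : 0 ≤ θ ^ n := by positivity
  by_cases hA : φ a = φ b
  · left; exact gen _ _ _ _ a1 b1 (by rw [hA, dist_self]; exact hθ0)
  by_cases hB : φ b = φ c
  · right; exact gen _ _ _ _ b1 c1 (by rw [hB, dist_self]; exact hθ0)
  have eb : φ b = φ a + 1 := by omega
  have ec : φ c = φ a + 2 := by omega
  rw [eb] at b1
  rw [ec] at c1
  push_cast at b1 c1
  rcases min_le_iff.1 (H n hN (φ a)) with h | h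
  · left; exact gen _ _ _ _ a1 b1 h
  · right; exact gen _ _ _ _ b1 c1 h

lemma dyad_dense {a b : ℝ} (ha : 0 ≤ a) (hab : a < b) : ∃ x ∈ dyadSet, a < x ∧ x < b := by
  obtain ⟨n, hn⟩ := exists_pow_lt_of_lt_one (sub_pos.2 hab) (show (1/2 : ℝ) < 1 by norm_num)
  have h2 : (0:ℝ) < 2 ^ n := by positivity
  refine ⟨((⌊a * 2 ^ n⌋₊ + 1 : ℕ) : ℝ) / 2 ^ n, ⟨n, _, rfl⟩, ?_, ?_⟩
  · rw [lt_div_iff₀ h2]; push_cast; exact Nat.lt_floor_add_one _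
  · rw [div_lt_iff₀ h2]; push_cast
    have := Nat.floor_le (show 0 ≤ a * 2 ^ n by positivity)
    rw [div_pow, one_pow, div_lt_iff₀ h2] at hn
    nlinarith

lemma dyad_right_neBot {t : ℝ} (ht : 0 ≤ t) : (𝓝[dyadSet ∩ Ioi t] t).NeBot := by
  rw [← mem_closure_iff_nhdsWithin_neBot, Metric.mem_closure_iff]
  intro ε hε
  obtain ⟨x, hx, h1, h2⟩ := dyad_dense ht (show t < t + ε by linarith)
  refine ⟨x, ⟨hx, h1⟩, ?_⟩
  rw [Real.dist_eq, abs_lt]; constructor <;> linarith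

def DyadMod {E : Type*} [MetricSpace E] (z : ℝ → E) : Prop :=
  ∀ ε : ℝ, 0 < ε → ∃ δ > 0, ∀ s ∈ dyadSet, ∀ t ∈ dyadSet, ∀ u ∈ dyadSet, s ≤ t → t ≤ u →
    u - s ≤ δ → dist (z s) (z t) ≤ ε ∨ dist (z t) (z u) ≤ ε

lemma DyadMod.right {E : Type*} [MetricSpace E] [CompleteSpace E] {z : ℝ → E} (hz : DyadMod z)
    {t : ℝ} (ht : 0 ≤ t) : ∃ L, Tendsto z (𝓝[dyadSet ∩ Ioi t] t) (𝓝 L) := by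
  have := dyad_right_neBot ht
  rw [← cauchy_map_iff_exists_tendsto, Metric.cauchy_iff]
  refine ⟨inferInstance, fun ε hε => ?_⟩
  obtain ⟨δ, hδ, h⟩ := hz (ε / 3) (by positivity)
  have mem : ∀ b > t, dyadSet ∩ Ioo t b ∈ 𝓝[dyadSet ∩ Ioi t] t := by
    intro b hb
    filter_upwards [self_mem_nhdsWithin, mem_nhdsWithin_of_mem_nhds (Iio_mem_nhds hb)] with x hx hx'
    exact ⟨hx.1, hx.2, hx'⟩
  by_cases hc : ∃ a ∈ dyadSet, ∃ b ∈ dyadSet, t < a ∧ a ≤ b ∧ b < t + δ ∧ ε / 3 < dist (z a) (z b)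
  · obtain ⟨a, ha, b, hb, hta, hab, hbt, hd⟩ := hc
    refine ⟨_, image_mem_map (mem a hta), ?_⟩
    have key : ∀ x ∈ dyadSet ∩ Ioo t a, dist (z x) (z a) ≤ ε / 3 := by
      rintro x ⟨hx, hx1, hx2⟩
      rcases h x hx a ha b hb hx2.le hab (by linarith) with h | h
      · exact h
      · linarith
    rintro _ ⟨x, hx, rfl⟩ _ ⟨y, hy, rfl⟩
    have := dist_triangle_right (z x) (z y) (z a)
    linarith [key x hx, key y hy]
  · push Not at hc
    refine ⟨_, image_mem_map (mem (t + δ) (by linarith)), ?_⟩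
    rintro _ ⟨x, hx, rfl⟩ _ ⟨y, hy, rfl⟩
    rcases le_total x y with hxy | hxy
    · linarith [hc x hx.1 y hy.1 hx.2.1 hxy hy.2.2]
    · rw [dist_comm]
      linarith [hc y hy.1 x hx.1 hy.2.1 hxy hx.2.2]

lemma DyadMod.left {E : Type*} [MetricSpace E] [CompleteSpace E] {z : ℝ → E} (hz : DyadMod z)
    (t : ℝ) : ∃ L, Tendsto z (𝓝[dyadSet ∩ Iio t] t) (𝓝 L) := by
  rcases eq_or_neBot (𝓝[dyadSet ∩ Iio t] t) with hbot | hne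
  · exact ⟨z 0, by rw [hbot]; exact tendsto_bot⟩
  rw [← cauchy_map_iff_exists_tendsto, Metric.cauchy_iff]
  refine ⟨inferInstance, fun ε hε => ?_⟩
  obtain ⟨δ, hδ, h⟩ := hz (ε / 3) (by positivity)
  have mem : ∀ b < t, dyadSet ∩ Ioo b t ∈ 𝓝[dyadSet ∩ Iio t] t := by
    intro b hb
    filter_upwards [self_mem_nhdsWithin, mem_nhdsWithin_of_mem_nhds (Ioi_mem_nhds hb)] with x hx hx'
    exact ⟨hx.1, hx', hx.2⟩
  by_cases hc : ∃ a ∈ dyadSet, ∃ b ∈ dyadSet, t - δ < a ∧ a ≤ b ∧ b < t ∧ ε / 3 < dist (z a) (z b)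
  · obtain ⟨a, ha, b, hb, hta, hab, hbt, hd⟩ := hc
    refine ⟨_, image_mem_map (mem b hbt), ?_⟩
    have key : ∀ x ∈ dyadSet ∩ Ioo b t, dist (z b) (z x) ≤ ε / 3 := by
      rintro x ⟨hx, hx1, hx2⟩
      rcases h a ha b hb x hx hab hx1.le (by linarith) with h | h
      · linarith
      · exact h
    rintro _ ⟨x, hx, rfl⟩ _ ⟨y, hy, rfl⟩
    have := dist_triangle_left (z x) (z y) (z b)
    linarith [key x hx, key y hy]
  · push Not at hc
    refine ⟨_, image_mem_map (mem (t - δ) (by linarith)), ?_⟩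
    rintro _ ⟨x, hx, rfl⟩ _ ⟨y, hy, rfl⟩
    rcases le_total x y with hxy | hxy
    · linarith [hc x hx.1 y hy.1 hx.2.1 hxy hy.2.2]
    · rw [dist_comm]
      linarith [hc y hy.1 x hx.1 hy.2.1 hxy hx.2.2]

lemma DyadMod.cadlag {E : Type*} [MetricSpace E] [CompleteSpace E] {z y : ℝ → E} (hz : DyadMod z)
    (hy : ∀ t, 0 ≤ t → Tendsto z (𝓝[dyadSet ∩ Ioi t] t) (𝓝 (y t))) :
    (∀ t, 0 ≤ t → Tendsto y (𝓝[>] t) (𝓝 (y t))) ∧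
    (∀ t, ∃ L, Tendsto y (𝓝[Ico 0 t] t) (𝓝 L)) := by
  constructor
  · intro t ht
    rw [Metric.nhds_basis_closedBall.tendsto_right_iff]
    intro ε hε
    have h1 := (hy t ht).eventually (Metric.closedBall_mem_nhds (y t) hε)
    rw [eventually_nhdsWithin_iff, Metric.eventually_nhds_iff] at h1
    obtain ⟨δ, hδ, h1⟩ := h1
    have : Ioo t (t + δ) ∈ 𝓝[>] t := Ioo_mem_nhdsGT (by linarith)
    filter_upwards [this] with s hs
    have := dyad_right_neBot (ht.trans hs.1.le)
    refine Metric.isClosed_closedBall.mem_of_tendsto (hy s (ht.trans hs.1.le)) ?_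
    filter_upwards [self_mem_nhdsWithin, mem_nhdsWithin_of_mem_nhds (Iio_mem_nhds hs.2)] with x hx hx'
    have hx2 := hx.2
    simp only [mem_Ioi, mem_Iio] at hx2 hx'
    refine h1 ?_ ⟨hx.1, hs.1.trans hx2⟩
    rw [Real.dist_eq, abs_lt]; constructor <;> linarith [hs.1]
  · intro t
    obtain ⟨L, hL⟩ := hz.left t
    refine ⟨L, ?_⟩
    rw [Metric.nhds_basis_closedBall.tendsto_right_iff]
    intro ε hε
    have h1 := hL.eventually (Metric.closedBall_mem_nhds L hε)
    rw [eventually_nhdsWithin_iff, Metric.eventually_nhds_iff] at h1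
    obtain ⟨δ, hδ, h1⟩ := h1
    filter_upwards [self_mem_nhdsWithin, mem_nhdsWithin_of_mem_nhds (Ioi_mem_nhds (show t - δ < t by linarith))] with s hs hs'
    simp only [mem_Ioi] at hs'
    have := dyad_right_neBot hs.1
    refine Metric.isClosed_closedBall.mem_of_tendsto (hy s hs.1) ?_
    filter_upwards [self_mem_nhdsWithin, mem_nhdsWithin_of_mem_nhds (Iio_mem_nhds hs.2)] with x hx hx'
    have hx2 := hx.2
    simp only [mem_Ioi, mem_Iio] at hx2 hx'
    refine h1 ?_ ⟨hx.1, hx'⟩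
    rw [Real.dist_eq, abs_lt]; constructor <;> linarith

/-- Markov-type tail bound for one triple. -/
lemma triple_tail {Ξ : Type*} [MeasurableSpace Ξ] (Q : Measure Ξ) (f g : Ξ → ℝ)
    (hf : Measurable f) (hg : Measurable g) (q c B : ℝ) (hq : 0 < q) (hc : 0 < c)
    (h : ∫⁻ ω, ENNReal.ofReal (f ω ^ q * g ω ^ q) ∂Q ≤ ENNReal.ofReal B) :
    Q {ω | c < min (f ω) (g ω)} ≤ ENNReal.ofReal (B / c ^ (2 * q)) := by
  have hcq : 0 < c ^ (2 * q) := by positivity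
  have hm : Measurable fun ω => ENNReal.ofReal (f ω ^ q * g ω ^ q) := by fun_prop
  have key := meas_ge_le_lintegral_div (μ := Q) hm.aemeasurable
    (ε := ENNReal.ofReal (c ^ (2 * q))) (by simpa using hcq) ENNReal.ofReal_ne_top
  rw [ENNReal.ofReal_div_of_pos hcq]
  refine (measure_mono ?_).trans (key.trans (ENNReal.div_le_div_right h _))
  intro ω hω
  simp only [mem_setOf_eq, lt_min_iff] at hω ⊢
  apply ENNReal.ofReal_le_ofReal
  rw [two_mul, Real.rpow_add hc]
  have h1 := hω.1.le
  have h2 := hω.2.le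
  have h3 : 0 ≤ f ω ^ q := Real.rpow_nonneg (hc.le.trans h1) q
  gcongr

lemma ae_dyadMod
    {Ξ : Type*} [MeasurableSpace Ξ] (Q : Measure Ξ)
    {E : Type*} [MetricSpace E]
    (T : ℝ) (Z : ℝ → Ξ → E)
    (hZT : ∀ t, T ≤ t → Z t = Z T)
    (hmeas : ∀ s t, Measurable fun ω => dist (Z s ω) (Z t ω))
    (q r C : ℝ) (hq : 0 < q) (hr : 0 < r) (hC : 0 < C)
    (hineq : ∀ s t u : ℝ, s ≤ t → t ≤ u →
      ∫⁻ ω, ENNReal.ofReal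
          ((dist (Z s ω) (Z t ω)) ^ q * (dist (Z t ω) (Z u ω)) ^ q) ∂Q
        ≤ ENNReal.ofReal (C * (u - s) ^ (1 + r))) :
    ∀ᵐ ω ∂Q, DyadMod (fun t => Z t ω) := by
  set ρ : ℝ := 2 ^ (-(r / 2)) with hρ
  have hρ0 : 0 < ρ := by positivity
  have hρ1 : ρ < 1 := Real.rpow_lt_one_of_one_lt_of_neg (by norm_num) (by linarith)
  set θ : ℝ := ρ ^ (1 / (2 * q)) with hθ
  have hθ0 : 0 < θ := by positivity
  have hθ1 : θ < 1 := Real.rpow_lt_one hρ0.le hρ1 (by positivity)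
  have hθq : θ ^ (2 * q) = ρ := by
    rw [hθ, ← Real.rpow_mul hρ0.le, one_div_mul_cancel (by positivity), Real.rpow_one]
  set M : ℕ := ⌈T⌉₊ with hM
  let A : ℕ → ℕ → Set Ξ := fun n k => {ω | θ ^ n <
    min (dist (Z ((k : ℝ) / 2 ^ n) ω) (Z (((k : ℝ) + 1) / 2 ^ n) ω))
      (dist (Z (((k : ℝ) + 1) / 2 ^ n) ω) (Z (((k : ℝ) + 2) / 2 ^ n) ω))}
  let B : ℕ → Set Ξ := fun n => ⋃ k ∈ Finset.range (M * 2 ^ n), A n k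
  have hA : ∀ n k, Q (A n k) ≤ ENNReal.ofReal (C * 2 ^ (1 + r) * ((1 / 2) ^ n * ρ ^ n)) := by
    intro n k
    refine (triple_tail Q _ _ (hmeas _ _) (hmeas _ _) q (θ ^ n) _ hq (by positivity)
      (hineq ((k : ℝ) / 2 ^ n) (((k : ℝ) + 1) / 2 ^ n) (((k : ℝ) + 2) / 2 ^ n)
        (by gcongr; linarith) (by gcongr; linarith))).trans_eq ?_
    congr 1
    have e1 : ((k : ℝ) + 2) / 2 ^ n - k / 2 ^ n = 2 * (1 / 2) ^ n := by
      rw [← sub_div, div_pow, one_pow]; ring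
    have e2 : (θ ^ n) ^ (2 * q) = ρ ^ n := by
      rw [← hθq, ← Real.rpow_natCast, ← Real.rpow_natCast, ← Real.rpow_mul hθ0.le,
        ← Real.rpow_mul hθ0.le, mul_comm]
    have e3 : ((1 / 2 : ℝ) ^ n) ^ (1 + r) = (1 / 2) ^ n * (ρ ^ n * ρ ^ n) := by
      rw [Real.rpow_add (by positivity), Real.rpow_one]
      congr 1
      rw [← mul_pow, hρ, ← Real.rpow_add (by norm_num), ← Real.rpow_natCast, ← Real.rpow_natCast,
        ← Real.rpow_mul (by norm_num), ← Real.rpow_mul (by norm_num), one_div,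
        Real.inv_rpow (by norm_num), ← Real.rpow_neg (by norm_num)]
      congr 1; ring
    rw [e1, e2, Real.mul_rpow (by norm_num) (by positivity), e3]
    have : ρ ^ n ≠ 0 := by positivity
    field_simp
  have hB : ∀ n, Q (B n) ≤ ENNReal.ofReal (M * (C * 2 ^ (1 + r)) * ρ ^ n) := by
    intro n
    refine (measure_biUnion_finset_le _ _).trans ((Finset.sum_le_sum fun k _ => hA n k).trans_eq ?_)
    rw [Finset.sum_const, Finset.card_range, nsmul_eq_mul, ← ENNReal.ofReal_natCast,
      ← ENNReal.ofReal_mul (by positivity)]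
    congr 1
    push_cast
    rw [div_pow, one_pow]
    field_simp
  have hsum : ∑' n, Q (B n) ≠ ⊤ := by
    refine ne_top_of_le_ne_top ?_ (ENNReal.tsum_le_tsum hB)
    exact ((summable_geometric_of_lt_one hρ0.le hρ1).mul_left _).tsum_ofReal_ne_top
  filter_upwards [ae_eventually_notMem hsum] with ω hω
  obtain ⟨N, hN⟩ := eventually_atTop.1 hω
  intro ε hε
  refine dyad_modulus (fun t => Z t ω) θ hθ0 hθ1 N ?_ ε hε
  intro n hn k
  by_cases hk : k < M * 2 ^ n
  · have := hN n hn
    simp only [B, mem_iUnion, not_exists, Finset.mem_range] at this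
    exact not_lt.1 (this k hk)
  · have hk' : T ≤ (k : ℝ) / 2 ^ n := by
      rw [le_div_iff₀ (by positivity)]
      push Not at hk
      have h1 : (M : ℝ) * 2 ^ n ≤ k := by exact_mod_cast hk
      have h2 : T ≤ M := Nat.le_ceil T
      have h3 : (0:ℝ) < 2 ^ n := by positivity
      nlinarith
    have hk2 : T ≤ ((k : ℝ) + 1) / 2 ^ n := hk'.trans (by gcongr; linarith)
    have : dist (Z ((k : ℝ) / 2 ^ n) ω) (Z (((k : ℝ) + 1) / 2 ^ n) ω) = 0 := by
      rw [hZT _ hk', hZT _ hk2, dist_self]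
    refine (min_le_left _ _).trans ?_
    simp only [this]
    positivity

/-- **Corollary (càdlàg modification under a product-moment condition).**
Let `(Ξ, 𝒢, ℚ)` be a complete probability space, `(E, Δ)` a complete metric space,
`T > 0`, and `X = (X_t)_{t∈[0,T]}` a family of functions `X_t : Ξ → E` such that
`ω ↦ dist (X s ω) (X t ω)` is measurable for all `s, t ∈ [0,T]` and `X` is continuous
in probability.  If there exist `q > 1/2`, `r > 0` and `C > 0` with
`E[Δ(X_s,X_t)^q · Δ(X_t,X_u)^q] ≤ C |u−s|^{1+r}` for all `0 ≤ s ≤ t ≤ u ≤ T`,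
then `X` has a càdlàg modification. -/
theorem cadlag_modification_of_moment
    {Ξ : Type*} [MeasurableSpace Ξ] (Q : Measure Ξ) [IsProbabilityMeasure Q]
    (hQcomplete : Q.IsComplete)
    {E : Type*} [MetricSpace E] [CompleteSpace E]
    (T : ℝ) (hT : 0 < T)
    (X : ℝ → Ξ → E)
    (hmeas : ∀ s ∈ Set.Icc (0 : ℝ) T, ∀ t ∈ Set.Icc (0 : ℝ) T,
      Measurable fun ω => dist (X s ω) (X t ω))
    (hcontP : ∀ t ∈ Set.Icc (0 : ℝ) T, ∀ ε > (0 : ℝ),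
      Tendsto (fun s => Q {ω | ε < dist (X s ω) (X t ω)})
        (nhdsWithin t (Set.Icc (0 : ℝ) T)) (nhds 0))
    (q r C : ℝ) (hq : 1 / 2 < q) (hr : 0 < r) (hC : 0 < C)
    (hineq : ∀ s t u : ℝ, 0 ≤ s → s ≤ t → t ≤ u → u ≤ T →
      ∫⁻ ω, ENNReal.ofReal
          ((dist (X s ω) (X t ω)) ^ q * (dist (X t ω) (X u ω)) ^ q) ∂Q
        ≤ ENNReal.ofReal (C * |u - s| ^ (1 + r))) :
    ∃ X' : ℝ → Ξ → E,
      (∀ ω : Ξ,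
        (∀ t ∈ Set.Ico (0 : ℝ) T,
          Tendsto (fun s => X' s ω) (nhdsWithin t (Set.Ioc t T)) (nhds (X' t ω))) ∧
        (∀ t ∈ Set.Ioc (0 : ℝ) T, ∃ L : E,
          Tendsto (fun s => X' s ω) (nhdsWithin t (Set.Ico 0 t)) (nhds L))) ∧
      (∀ t ∈ Set.Icc (0 : ℝ) T, ∀ᵐ ω ∂Q, dist (X t ω) (X' t ω) = 0) := by
  classical
  set p : ℝ → ℝ := fun t => max 0 (min t T) with hp
  have hpI : ∀ t, p t ∈ Icc (0 : ℝ) T := fun t =>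
    ⟨le_max_left _ _, max_le hT.le (min_le_right _ _)⟩
  have hpid : ∀ t ∈ Icc (0 : ℝ) T, p t = t := fun t ht => by
    simp only [hp]; rw [min_eq_left ht.2, max_eq_right ht.1]
  have hpmono : Monotone p := fun a b hab => max_le_max le_rfl (min_le_min hab le_rfl)
  have hplip : ∀ s u, s ≤ u → p u - p s ≤ u - s := by
    intro s u hsu
    simp only [hp]
    rcases max_cases 0 (min u T) with h | h <;> rcases max_cases 0 (min s T) with h' | h' <;>
    rcases min_cases u T with h2 | h2 <;> rcases min_cases s T with h3 | h3 <;> linarith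
  have hpc : Continuous p := by fun_prop
  have hgood : ∀ᵐ ω ∂Q, DyadMod (fun t => X (p t) ω) := by
    refine ae_dyadMod Q T (fun t => X (p t)) ?_ ?_ q r C (by linarith) hr hC ?_
    · intro t ht
      simp only [hp, min_eq_right ht, min_self]
    · exact fun s t => hmeas _ (hpI s) _ (hpI t)
    · intro s t u hst htu
      refine (hineq _ _ _ (hpI s).1 (hpmono hst) (hpmono htu) (hpI u).2).trans ?_
      apply ENNReal.ofReal_le_ofReal
      have h1 : 0 ≤ p u - p s := sub_nonneg.2 (hpmono (hst.trans htu))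
      rw [abs_of_nonneg h1]
      have := hplip s u (hst.trans htu)
      gcongr
  have hex : ∀ ω, ∃ y : ℝ → E, DyadMod (fun t => X (p t) ω) → ∀ t, 0 ≤ t →
      Tendsto (fun t => X (p t) ω) (𝓝[dyadSet ∩ Ioi t] t) (𝓝 (y t)) := by
    intro ω
    by_cases h : DyadMod (fun t => X (p t) ω)
    · have : ∀ t, ∃ L, 0 ≤ t →
          Tendsto (fun t => X (p t) ω) (𝓝[dyadSet ∩ Ioi t] t) (𝓝 L) := by
        intro t
        by_cases ht : 0 ≤ t
        · obtain ⟨L, hL⟩ := h.right ht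
          exact ⟨L, fun _ => hL⟩
        · exact ⟨X 0 ω, fun h => absurd h ht⟩
      choose y hy using this
      exact ⟨y, fun _ => hy⟩
    · exact ⟨fun _ => X 0 ω, fun h' => absurd h' h⟩
  choose y hy using hex
  refine ⟨fun t ω => if DyadMod (fun t => X (p t) ω) then y ω t else X 0 ω, ?_, ?_⟩
  · intro ω
    by_cases h : DyadMod (fun t => X (p t) ω)
    · simp only [h, if_true]
      obtain ⟨h1, h2⟩ := h.cadlag (hy ω h)
      exact ⟨fun t ht => (h1 t ht.1).mono_left (nhdsWithin_mono _ fun x hx => hx.1),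
        fun t _ => h2 t⟩
    · simp only [h, if_false]
      exact ⟨fun t _ => tendsto_const_nhds, fun t _ => ⟨_, tendsto_const_nhds⟩⟩
  · intro t ht
    have hne := dyad_right_neBot ht.1
    have htend : Tendsto p (𝓝[dyadSet ∩ Ioi t] t) (𝓝[Icc 0 T] t) := by
      refine tendsto_nhdsWithin_iff.2 ⟨?_, Eventually.of_forall hpI⟩
      have := hpc.tendsto t
      rw [hpid t ht] at this
      exact this.mono_left nhdsWithin_le_nhds
    have hmeasure : TendstoInMeasure Q (fun s => X (p s)) (𝓝[dyadSet ∩ Ioi t] t) (X t) := by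
      rw [tendstoInMeasure_iff_dist]
      intro ε hε
      refine tendsto_of_tendsto_of_tendsto_of_le_of_le tendsto_const_nhds
        ((hcontP t ht (ε / 2) (by positivity)).comp htend) (fun _ => zero_le) ?_
      intro s
      refine measure_mono fun ω hω => ?_
      simp only [mem_setOf_eq] at hω ⊢
      linarith
    obtain ⟨ns, hns, hae⟩ := hmeasure.exists_seq_tendsto_ae'
    filter_upwards [hae, hgood] with ω h1 h2
    simp only [h2, if_true]
    rw [dist_eq_zero]
    exact tendsto_nhds_unique h1 ((hy ω h2 t ht.1).comp hns)
end

section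
/- Let (Ω, ℱ, ℙ) be a probability space and let φ: Ω × ℝ^d → 𝒟_0 be ℱ ⊗ ℬ(ℝ^d)/𝒟-measurable and such that φ(ω, ·): ℝ^d → (𝒟_0, ‖·‖_0) is continuous for every ω ∈ Ω. Suppose there are p > 2d and c > 0 such that E[‖φ(·, x) − φ(·, y)‖_0^p] ≤ c |x−y|^p for all x, y ∈ ℝ^d. Fix α > 1 and let f_α(x) = (max(x^d (log⁺ x)^α, 1))^{−1} for x ≥ 0, where log⁺ x = max(log x, 0). Then the function Z: Ω → [0, ∞] defined by Z(ω) = ( ∫_{ℝ^d} ∫_{ℝ^d} ( ‖φ(ω,x) − φ(ω,y)‖_0 / |x−y| )^p f_α(|x|) f_α(|y|) dx dy )^{1/p} is a measurable, p-integrable random variable, and there is a constant c_0 > 0 depending only on α, p, d such that for all x, y ∈ ℝ^d and all ω ∈ Ω: ‖φ(ω,x) − φ(ω,y)‖_0 ≤ c_0 Z(ω) |x−y|^{1 − 2d/p} · max( (max(|x|,|y|))^{2d/p} (log⁺(max(|x|,|y|)))^{2α/p}, 1 ). -/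
open MeasureTheory Filter Set Topology
open scoped ENNReal

noncomputable section

/-- The time interval `[0, T]` as a type. -/
abbrev Icc0 (T : ℝ) : Type := ↥(Set.Icc (0 : ℝ) T)

/-- A function on `[0, T]` is càdlàg if it is right-continuous and has left limits. -/
def IsCadlag {E : Type*} [TopologicalSpace E] {T : ℝ} (f : Icc0 T → E) : Prop :=
  (∀ t, Tendsto f (nhdsWithin t (Set.Ioi t)) (nhds (f t))) ∧
    (∀ t, ∃ L, Tendsto f (nhdsWithin t (Set.Iio t)) (nhds L))

/-- `𝒟₀`: the space of càdlàg functions from `[0, T]` to `ℝ^d`. -/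
def D0 (T : ℝ) (d : ℕ) : Type :=
  {f : Icc0 T → EuclideanSpace ℝ (Fin d) // IsCadlag f}

/-- The uniform distance `‖x − y‖₀` on `𝒟₀`. -/
noncomputable def unifDist {T : ℝ} {d : ℕ} (f g : D0 T d) : ℝ :=
  ⨆ t : Icc0 T, dist (f.1 t) (g.1 t)

/-- `𝒟`: the σ-algebra on `𝒟₀` generated by the evaluation maps. -/
def Dsigma (T : ℝ) (d : ℕ) : MeasurableSpace (D0 T d) :=
  ⨆ t : Icc0 T, MeasurableSpace.comap (fun f => f.1 t) inferInstance

/-- Continuity of a map `ℝ^d → (𝒟₀, ‖·‖₀)`. -/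
def ContinuousInD0 {T : ℝ} {d : ℕ} (F : EuclideanSpace ℝ (Fin d) → D0 T d) : Prop :=
  ∀ x, ∀ ε > (0 : ℝ), ∃ δ > (0 : ℝ), ∀ y, dist x y < δ → unifDist (F x) (F y) < ε

/-- The weight `f_α(x) = (max(x^d (log⁺ x)^α, 1))⁻¹`. -/
noncomputable def grrWeight (d : ℕ) (α : ℝ) (x : ℝ) : ℝ :=
  (max (x ^ d * (max (Real.log x) 0) ^ α) 1)⁻¹

/-- The Garsia–Rodemich–Rumsey functional
`Z(ω) = (∫∫ (‖φ(ω,x) − φ(ω,y)‖₀ / |x−y|)^p f_α(|x|) f_α(|y|) dx dy)^{1/p}`. -/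
noncomputable def grrZ {Ω : Type*} {T : ℝ} {d : ℕ} (p α : ℝ)
    (φ : Ω → EuclideanSpace ℝ (Fin d) → D0 T d) (ω : Ω) : ℝ≥0∞ :=
  (∫⁻ x : EuclideanSpace ℝ (Fin d), ∫⁻ y : EuclideanSpace ℝ (Fin d),
      ENNReal.ofReal ((unifDist (φ ω x) (φ ω y) / dist x y) ^ p *
        grrWeight d α ‖x‖ * grrWeight d α ‖y‖) ∂volume ∂volume) ^ (1 / p)


lemma cadlag_loc_bdd {T : ℝ} {d : ℕ} (f : D0 T d) : ∃ M : ℝ, ∀ t, ‖f.1 t‖ ≤ M := by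
  have hloc : ∀ t : Icc0 T, ∃ M : ℝ, ∀ᶠ s in 𝓝 t, ‖f.1 s‖ ≤ M := by
    intro t
    obtain ⟨L, hL⟩ := f.2.2 t
    have h1 := f.2.1 t
    refine ⟨max (‖f.1 t‖ + 1) (‖L‖ + 1), ?_⟩
    have e1 : ∀ᶠ s in 𝓝[>] t, ‖f.1 s‖ < ‖f.1 t‖ + 1 :=
      h1.norm.eventually_lt_const (by linarith)
    have e2 : ∀ᶠ s in 𝓝[<] t, ‖f.1 s‖ < ‖L‖ + 1 :=
      hL.norm.eventually_lt_const (by linarith)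
    rw [eventually_nhdsWithin_iff] at e1 e2
    filter_upwards [e1, e2] with s h1 h2
    rcases lt_trichotomy s t with h | h | h
    · exact le_max_of_le_right (h2 h).le
    · subst h; exact le_max_of_le_left (by linarith)
    · exact le_max_of_le_left (h1 h).le
  choose M hM using hloc
  obtain ⟨F, hF⟩ := isCompact_univ.elim_nhds_subcover' (X := Icc0 T)
    (fun t _ => {s | ‖f.1 s‖ ≤ M t}) (fun t _ => hM t)
  refine ⟨∑ t ∈ F, |M t|, fun s => ?_⟩
  have hs := hF (mem_univ s)
  simp only [mem_iUnion] at hs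
  obtain ⟨t, htF, ht⟩ := hs
  exact (le_trans ht (le_abs_self _)).trans
    (Finset.single_le_sum (f := fun t : ↑(univ : Set (Icc0 T)) => |M t|)
      (fun _ _ => abs_nonneg _) htF)

lemma ud_bdd {T : ℝ} {d : ℕ} (f g : D0 T d) :
    BddAbove (range fun t : Icc0 T => dist (f.1 t) (g.1 t)) := by
  obtain ⟨M, hM⟩ := cadlag_loc_bdd f
  obtain ⟨N, hN⟩ := cadlag_loc_bdd g
  refine ⟨M + N, ?_⟩
  rintro _ ⟨t, rfl⟩
  exact (dist_le_norm_add_norm _ _).trans (add_le_add (hM t) (hN t))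

lemma ud_nonneg {T : ℝ} {d : ℕ} (f g : D0 T d) : 0 ≤ unifDist f g :=
  Real.iSup_nonneg fun _ => dist_nonneg

lemma ud_self {T : ℝ} {d : ℕ} (f : D0 T d) : unifDist f f = 0 := by
  simp [unifDist]

lemma ud_comm {T : ℝ} {d : ℕ} (f g : D0 T d) : unifDist f g = unifDist g f := by
  simp [unifDist, dist_comm]

lemma ud_tri {T : ℝ} {d : ℕ} (f g h : D0 T d) :
    unifDist f h ≤ unifDist f g + unifDist g h := by
  refine Real.iSup_le (fun t => ?_) (add_nonneg (ud_nonneg _ _) (ud_nonneg _ _))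
  exact (dist_triangle _ (g.1 t) _).trans
    (add_le_add (le_ciSup (ud_bdd f g) t) (le_ciSup (ud_bdd g h) t))

lemma exists_count (T : ℝ) : ∃ Q : Set (Icc0 T), Q.Countable ∧
    ∀ f g : D0 T d, ∀ a : ℝ, (∃ t, a < dist (f.1 t) (g.1 t)) →
      ∃ t ∈ Q, a < dist (f.1 t) (g.1 t) := by
  obtain ⟨D, hDc, hDd⟩ := TopologicalSpace.exists_countable_dense (Icc0 T)
  refine ⟨D ∪ {t | t.1 = T}, hDc.union ?_, ?_⟩
  · apply Set.Subsingleton.countable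
    intro s hs t ht
    exact Subtype.ext (hs.trans ht.symm)
  · rintro f g a ⟨t, ht⟩
    by_cases htT : t.1 = T
    · exact ⟨t, Or.inr htT, ht⟩
    · have hlt : t < (⟨T, t.2.1.trans t.2.2, le_rfl⟩ : Icc0 T) :=
        lt_of_le_of_ne t.2.2 (fun h => htT (congrArg Subtype.val h))
      have hev : ∀ᶠ s in 𝓝[>] t, a < dist (f.1 s) (g.1 s) :=
        ((f.2.1 t).dist (g.2.1 t)).eventually_const_lt ht
      obtain ⟨u, hu, hsub⟩ := (mem_nhdsGT_iff_exists_Ioo_subset' hlt).1 hev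
      obtain ⟨s, hsD, hs⟩ := hDd.inter_open_nonempty (Ioo t u) isOpen_Ioo (nonempty_Ioo.2 hu)
      exact ⟨s, Or.inl hs, hsub hsD⟩

lemma ud_meas {T : ℝ} (hT : 0 < T) {d : ℕ} {Ω : Type} [MeasurableSpace Ω]
    (φ : Ω → EuclideanSpace ℝ (Fin d) → D0 T d)
    (hφ : @Measurable (Ω × EuclideanSpace ℝ (Fin d)) (D0 T d) inferInstance (Dsigma T d)
          (fun q => φ q.1 q.2)) :
    Measurable (fun q : Ω × EuclideanSpace ℝ (Fin d) × EuclideanSpace ℝ (Fin d) =>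
      unifDist (φ q.1 q.2.1) (φ q.1 q.2.2)) := by
  have hev : ∀ t : Icc0 T, Measurable
      (fun q : Ω × EuclideanSpace ℝ (Fin d) => (φ q.1 q.2).1 t) := by
    intro t
    have : @Measurable (D0 T d) _ (Dsigma T d) inferInstance (fun f => f.1 t) := by
      intro s hs
      exact (le_iSup (fun t : Icc0 T => MeasurableSpace.comap (fun f : D0 T d => f.1 t) inferInstance) t) _ ⟨s, hs, rfl⟩
    exact this.comp hφ
  obtain ⟨Q, hQ, hQd⟩ := exists_count (d := d) T
  have : Nonempty (Icc0 T) := ⟨⟨0, le_rfl, hT.le⟩⟩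
  refine measurable_of_Ioi fun a => ?_
  have : (fun q : Ω × EuclideanSpace ℝ (Fin d) × EuclideanSpace ℝ (Fin d) =>
      unifDist (φ q.1 q.2.1) (φ q.1 q.2.2)) ⁻¹' Ioi a =
      ⋃ t ∈ Q, {q | a < dist ((φ q.1 q.2.1).1 t) ((φ q.1 q.2.2).1 t)} := by
    ext q
    simp only [mem_preimage, mem_Ioi, mem_iUnion, mem_ofPred_eq, exists_prop]
    constructor
    · intro h
      exact hQd _ _ _ (exists_lt_of_lt_ciSup h)
    · rintro ⟨t, -, h⟩
      exact h.trans_le (le_ciSup (ud_bdd _ _) t)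
  rw [this]
  refine MeasurableSet.biUnion hQ fun t _ => ?_
  have m1 := (hev t).comp (measurable_fst.prodMk measurable_snd.fst :
    Measurable fun q : Ω × EuclideanSpace ℝ (Fin d) × EuclideanSpace ℝ (Fin d) => (q.1, q.2.1))
  have m2 := (hev t).comp (measurable_fst.prodMk measurable_snd.snd :
    Measurable fun q : Ω × EuclideanSpace ℝ (Fin d) × EuclideanSpace ℝ (Fin d) => (q.1, q.2.2))
  exact measurableSet_lt measurable_const (m1.dist m2)

lemma w_pos (d : ℕ) (α x : ℝ) : 0 < grrWeight d α x := by
  unfold grrWeight; positivity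

lemma w_meas (d : ℕ) (α : ℝ) : Measurable (grrWeight d α) := by
  unfold grrWeight
  exact (((measurable_id.pow_const d).mul
    ((Real.measurable_log.max measurable_const).pow_const α)).max measurable_const).inv

/-- doubling -/
lemma w_lower (d : ℕ) {α R x : ℝ} (hα : 1 < α) (hR : 0 ≤ R) (hx : 0 ≤ x) (hxR : x ≤ 3 * R) :
    (9 ^ d * 3 ^ α * max (R ^ d * (max (Real.log R) 0) ^ α) 1)⁻¹ ≤ grrWeight d α x := by
  unfold grrWeight
  have h0 : (1:ℝ) ≤ 9 ^ d * 3 ^ α :=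
    one_le_mul_of_one_le_of_one_le (one_le_pow₀ (by norm_num))
      (Real.one_le_rpow (by norm_num) (by linarith))
  have h3 : (0:ℝ) < 3 ^ α := by positivity
  gcongr
  set l := max (Real.log R) 0 with hl
  have hl0 : 0 ≤ l := le_max_right _ _
  refine max_le ?_ (one_le_mul_of_one_le_of_one_le h0 (le_max_right _ _))
  have hlog : max (Real.log x) 0 ≤ 2 + l := by
    refine max_le ?_ (by positivity)
    rcases hx.eq_or_lt with rfl | hx
    · simp; positivity
    have hRp : 0 < R := by linarith
    calc Real.log x ≤ Real.log (3 * R) := Real.log_le_log hx hxR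
      _ = Real.log 3 + Real.log R := Real.log_mul (by norm_num) hRp.ne'
      _ ≤ 2 + l := by
        gcongr
        · have := Real.log_le_sub_one_of_pos (show (0:ℝ) < 3 by norm_num); linarith
        · exact le_max_left _ _
  rcases le_total l 1 with h | h
  · have hR3 : R ≤ 3 := by
      rcases hR.eq_or_lt with rfl | hRp
      · norm_num
      have : Real.log R ≤ 1 := (le_max_left _ _).trans h
      have := (Real.log_le_iff_le_exp hRp).1 this
      have := Real.exp_one_lt_three
      linarith
    calc x ^ d * (max (Real.log x) 0) ^ α ≤ 9 ^ d * 3 ^ α := by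
          gcongr
          · linarith
          · linarith
      _ ≤ _ := le_mul_of_one_le_right (by positivity) (le_max_right _ _)
  · calc x ^ d * (max (Real.log x) 0) ^ α ≤ (9 * R) ^ d * (3 * l) ^ α := by
          gcongr
          · linarith
          · linarith
      _ = 9 ^ d * 3 ^ α * (R ^ d * l ^ α) := by
          rw [mul_pow, Real.mul_rpow (by norm_num) hl0]; ring
      _ ≤ _ := by gcongr; exact le_max_left _ _

lemma w_le_one (d : ℕ) (α x : ℝ) : grrWeight d α x ≤ 1 := by
  unfold grrWeight; exact inv_le_one_of_one_le₀ (le_max_right _ _)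

lemma w_int (d : ℕ) {α : ℝ} (hα : 1 < α) :
    ∫⁻ x : EuclideanSpace ℝ (Fin d), ENNReal.ofReal (grrWeight d α ‖x‖) < ⊤ := by
  rcases Nat.eq_zero_or_pos d with rfl | hd
  · calc ∫⁻ x : EuclideanSpace ℝ (Fin 0), ENNReal.ofReal (grrWeight 0 α ‖x‖)
        ≤ ∫⁻ x : EuclideanSpace ℝ (Fin 0), 1 := by
          gcongr with x
          exact ENNReal.ofReal_le_one.2 (w_le_one _ _ _)
      _ < ⊤ := by
          rw [lintegral_one]
          exact (Set.subsingleton_of_subsingleton.isCompact).measure_lt_top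
  have : Nonempty (Fin d) := ⟨⟨0, hd⟩⟩
  have key : Integrable (fun x : EuclideanSpace ℝ (Fin d) => grrWeight d α ‖x‖) := by
    rw [integrable_fun_norm_addHaar (μ := (volume : Measure (EuclideanSpace ℝ (Fin d)))) (f := grrWeight d α)]
    rw [finrank_euclideanSpace_fin]
    have hm : Measurable (fun y : ℝ => y ^ (d - 1) • grrWeight d α y) :=
      (measurable_id.pow_const _).smul (w_meas d α)
    have hsplit : Ioi (0:ℝ) ⊆ Ioc 0 (Real.exp 1) ∪ Ioi (Real.exp 1) := by
      intro x hx
      rcases le_or_gt x (Real.exp 1) with h | h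
      · exact Or.inl ⟨hx, h⟩
      · exact Or.inr h
    refine IntegrableOn.mono_set (IntegrableOn.union ?_ ?_) hsplit
    · refine Measure.integrableOn_of_bounded (M := (Real.exp 1) ^ (d - 1)) (by simp) hm.aestronglyMeasurable ?_
      filter_upwards [ae_restrict_mem measurableSet_Ioc] with y hy
      rw [smul_eq_mul, Real.norm_of_nonneg (mul_nonneg (pow_nonneg hy.1.le _) (w_pos _ _ _).le)]
      calc _ ≤ (Real.exp 1) ^ (d - 1) * 1 := by
            gcongr
            · exact (w_pos _ _ _).le
            · exact hy.1.le
            · exact hy.2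
            · exact w_le_one _ _ _
        _ = _ := mul_one _
    · have h1 : IntegrableOn (fun y : ℝ => y⁻¹ * (Real.log y) ^ (-α)) (Ioi (Real.exp 1)) := by
        refine integrableOn_Ioi_deriv_of_nonneg' (g := fun y => (Real.log y) ^ (1 - α) / (1 - α)) (l := 0) ?_ ?_ ?_
        · intro x hx
          have hx0 : 0 < x := (Real.exp_pos 1).trans_le hx
          have hl : 1 ≤ Real.log x := (Real.le_log_iff_exp_le hx0).2 hx
          have h := ((Real.hasDerivAt_log hx0.ne').rpow_const (p := 1 - α) (Or.inl (by linarith))).div_const (1 - α)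
          refine h.congr_deriv ?_
          have : 1 - α ≠ 0 := by linarith
          rw [show 1 - α - 1 = -α by ring]
          field_simp
        · intro x hx
          have hx0 : 0 < x := (Real.exp_pos 1).trans hx
          have hl : 1 ≤ Real.log x := (Real.le_log_iff_exp_le hx0).2 (le_of_lt hx)
          positivity
        · have := (tendsto_rpow_neg_atTop (y := α - 1) (by linarith)).comp Real.tendsto_log_atTop
          have := this.div_const (1 - α)
          simpa [Function.comp_def] using this
      refine Integrable.mono' h1 hm.aestronglyMeasurable ?_
      filter_upwards [ae_restrict_mem measurableSet_Ioi] with y hy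
      have hx0 : 0 < y := (Real.exp_pos 1).trans hy
      have hl : 1 ≤ Real.log y := (Real.le_log_iff_exp_le hx0).2 (le_of_lt hy)
      rw [smul_eq_mul, Real.norm_of_nonneg (mul_nonneg (pow_nonneg hx0.le _) (w_pos _ _ _).le)]
      unfold grrWeight
      rw [max_eq_left (by linarith : (0:ℝ) ≤ Real.log y), Real.rpow_neg (by linarith), ← mul_inv]
      have hp : 0 < (Real.log y) ^ α := by positivity
      calc y ^ (d - 1) * (max (y ^ d * (Real.log y) ^ α) 1)⁻¹
          ≤ y ^ (d - 1) * (y ^ d * (Real.log y) ^ α)⁻¹ := by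
            gcongr; exact le_max_left _ _
        _ = _ := by
            obtain ⟨k, rfl⟩ : ∃ k, d = k + 1 := ⟨d - 1, by omega⟩
            simp only [Nat.add_sub_cancel]
            rw [pow_succ]
            field_simp
  have h2 := key.lintegral_lt_top
  exact h2

lemma tri_int {E : Type*} [MeasurableSpace E] (μ ν κ : Measure E) [IsProbabilityMeasure μ]
    [IsProbabilityMeasure ν] [IsProbabilityMeasure κ] (ρ : E → E → ℝ≥0∞)
    (hm : Measurable (Function.uncurry ρ)) (ht : ∀ x y z, ρ x z ≤ ρ x y + ρ y z) :
    ∫⁻ u, ∫⁻ w, ρ u w ∂κ ∂μ ≤ ∫⁻ u, ∫⁻ v, ρ u v ∂ν ∂μ + ∫⁻ v, ∫⁻ w, ρ v w ∂κ ∂ν := by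
  have hr : ∀ u, Measurable (ρ u) := fun u => hm.of_uncurry_left
  calc ∫⁻ u, ∫⁻ w, ρ u w ∂κ ∂μ = ∫⁻ u, ∫⁻ v, ∫⁻ w, ρ u w ∂κ ∂ν ∂μ := by simp
    _ ≤ ∫⁻ u, ∫⁻ v, ∫⁻ w, (ρ u v + ρ v w) ∂κ ∂ν ∂μ := by
        gcongr with u v w; exact ht _ _ _
    _ = ∫⁻ u, (∫⁻ v, ρ u v ∂ν + ∫⁻ v, ∫⁻ w, ρ v w ∂κ ∂ν) ∂μ := by
        congr 1; ext u
        rw [← lintegral_add_left (hr u)]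
        congr 1; ext v
        rw [lintegral_add_left measurable_const]; simp
    _ = _ := by
        rw [lintegral_add_left (by exact hm.lintegral_prod_right')]; simp

open ProbabilityTheory in
lemma ball_avg {d : ℕ} {p : ℝ} (hp : 1 ≤ p) (ρ : EuclideanSpace ℝ (Fin d) → EuclideanSpace ℝ (Fin d) → ℝ≥0∞)
    (hm : Measurable (Function.uncurry ρ)) {A B : Set (EuclideanSpace ℝ (Fin d))} {J : ℝ≥0∞}
    (hA : volume A ≠ 0) (hA' : volume A ≠ ⊤) (hB : volume B ≠ 0) (hB' : volume B ≠ ⊤)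
    (h : ∫⁻ u in A, ∫⁻ v in B, (ρ u v) ^ p ≤ J) :
    ∫⁻ u, ∫⁻ v, ρ u v ∂(cond volume B) ∂(cond volume A) ≤ ((volume A)⁻¹ * (volume B)⁻¹ * J) ^ (1 / p) := by
  have := cond_isProbabilityMeasure_of_finite hA hA'
  have := cond_isProbabilityMeasure_of_finite hB hB'
  have hp0 : 0 < p := by linarith
  rw [lintegral_lintegral hm.aemeasurable]
  have := eLpNorm'_le_eLpNorm'_of_exponent_le one_pos hp ((cond volume A).prod (cond volume B)) (f := Function.uncurry ρ)
    hm.aestronglyMeasurable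
  simp only [eLpNorm', enorm_eq_self, ENNReal.rpow_one, div_one] at this
  refine this.trans ?_
  gcongr
  change ∫⁻ z : EuclideanSpace ℝ (Fin d) × EuclideanSpace ℝ (Fin d), ρ z.1 z.2 ^ p
    ∂((ProbabilityTheory.cond volume A).prod (ProbabilityTheory.cond volume B)) ≤ _
  rw [← lintegral_lintegral (f := fun u v => ρ u v ^ p) (hm.pow_const p).aemeasurable]
  simp only [ProbabilityTheory.cond, lintegral_smul_measure, smul_eq_mul]
  rw [lintegral_const_mul]
  · rw [mul_assoc]; gcongr
  · exact (Measurable.lintegral_prod_right' (hm.pow_const p))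

lemma step_const {d : ℕ} {p v s t : ℝ} (hp : 1 ≤ p) (hv : 0 < v) (hs : 0 < s) (hst : s / 2 ≤ t) (J : ℝ≥0∞) :
    ((ENNReal.ofReal (t ^ d * v))⁻¹ * (ENNReal.ofReal (s ^ d * v))⁻¹ * (ENNReal.ofReal ((3 * s) ^ p) * J)) ^ (1 / p)
     ≤ ENNReal.ofReal ((2 ^ d * 3 ^ p / v ^ 2) ^ (1 / p) * s ^ (1 - 2 * (d : ℝ) / p)) * J ^ (1 / p) := by
  have hp0 : 0 < p := by linarith
  have ht : 0 < t := by linarith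
  rw [← ENNReal.ofReal_inv_of_pos (by positivity), ← ENNReal.ofReal_inv_of_pos (by positivity),
    ← ENNReal.ofReal_mul (by positivity), ← mul_assoc, ← ENNReal.ofReal_mul (by positivity),
    ENNReal.mul_rpow_of_nonneg _ _ (by positivity), ENNReal.ofReal_rpow_of_nonneg (by positivity) (by positivity)]
  gcongr
  have e : (1 - 2 * (d : ℝ) / p) = (p - 2 * d) * (1 / p) := by field_simp
  rw [e, Real.rpow_mul hs.le, ← Real.mul_rpow (by positivity) (by positivity)]
  refine Real.rpow_le_rpow (by positivity) ?_ (by positivity)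
  calc (t ^ d * v)⁻¹ * (s ^ d * v)⁻¹ * (3 * s) ^ p
      ≤ ((s / 2) ^ d * v)⁻¹ * (s ^ d * v)⁻¹ * (3 * s) ^ p := by gcongr
    _ = _ := by
      rw [Real.mul_rpow (by norm_num) hs.le, Real.rpow_sub hs, div_pow,
        show (2 * (d : ℝ)) = ((2 * d : ℕ) : ℝ) by push_cast; ring, Real.rpow_natCast, pow_mul']
      field_simp

open ProbabilityTheory in
lemma core {d : ℕ} {p : ℝ} (hp1 : 1 ≤ p) (hp : 2 * (d : ℝ) < p) :
    ∃ C : ℝ, 0 < C ∧ ∀ (ρ : EuclideanSpace ℝ (Fin d) → EuclideanSpace ℝ (Fin d) → ℝ≥0∞),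
      Measurable (Function.uncurry ρ) → (∀ x y z, ρ x z ≤ ρ x y + ρ y z) →
      (∀ x y, ρ x y = ρ y x) → (∀ x, Tendsto (ρ x) (𝓝 x) (𝓝 0)) →
      ∀ (S : Set (EuclideanSpace ℝ (Fin d))) (J : ℝ≥0∞) (x y : EuclideanSpace ℝ (Fin d)),
      0 < dist x y → Metric.ball x (dist x y) ⊆ S → Metric.ball y (dist x y) ⊆ S →
      (∀ A B : Set (EuclideanSpace ℝ (Fin d)), MeasurableSet A → MeasurableSet B → A ⊆ S → B ⊆ S → ∀ δ : ℝ, 0 ≤ δ →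
        (∀ u ∈ A, ∀ v ∈ B, dist u v ≤ δ) →
        ∫⁻ u in A, ∫⁻ v in B, (ρ u v) ^ p ≤ ENNReal.ofReal (δ ^ p) * J) →
      ρ x y ≤ ENNReal.ofReal (C * dist x y ^ (1 - 2 * (d : ℝ) / p)) * J ^ (1 / p) := by
  have hp0 : 0 < p := by linarith
  set β := 1 - 2 * (d : ℝ) / p with hβ
  have hβ0 : 0 < β := by
    rw [hβ, sub_pos, div_lt_one hp0]; exact hp
  set V := volume (Metric.ball (0 : EuclideanSpace ℝ (Fin d)) 1) with hV
  have hV0 : V ≠ 0 := (Metric.measure_ball_pos _ _ one_pos).ne'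
  have hVt : V ≠ ⊤ := measure_ball_lt_top.ne
  have hv : 0 < V.toReal := ENNReal.toReal_pos hV0 hVt
  set C1 : ℝ := (2 ^ d * 3 ^ p / V.toReal ^ 2) ^ (1 / p) with hC1
  have hC1p : 0 < C1 := by positivity
  set q : ℝ := (1 / 2) ^ β with hq
  have hq0 : 0 < q := by positivity
  have hq1 : q < 1 := Real.rpow_lt_one (by norm_num) (by norm_num) hβ0
  refine ⟨C1 * (2 * (1 - q)⁻¹ + 1), by have : 0 < 1 - q := by linarith
                                       positivity, ?_⟩
  intro ρ hm ht hsym h0 S J x y hr hxS hyS hJ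
  set r := dist x y with hrdef
  have vol : ∀ (z : EuclideanSpace ℝ (Fin d)) (s : ℝ), 0 < s →
      volume (Metric.ball z s) = ENNReal.ofReal (s ^ d * V.toReal) := by
    intro z s hs
    rw [Measure.addHaar_ball_of_pos _ _ hs, finrank_euclideanSpace_fin,
      ENNReal.ofReal_mul (by positivity), ENNReal.ofReal_toReal hVt]
  have prob : ∀ (z : EuclideanSpace ℝ (Fin d)) (s : ℝ), 0 < s →
      IsProbabilityMeasure (ProbabilityTheory.cond volume (Metric.ball z s)) := fun z s hs =>
    cond_isProbabilityMeasure_of_finite (Metric.measure_ball_pos _ _ hs).ne' measure_ball_lt_top.ne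
  have step : ∀ (a b : EuclideanSpace ℝ (Fin d)) (s t : ℝ), 0 < s → s / 2 ≤ t → t ≤ s → dist a b ≤ s →
      Metric.ball a t ⊆ S → Metric.ball b s ⊆ S →
      ∫⁻ u, ∫⁻ v, ρ u v ∂(ProbabilityTheory.cond volume (Metric.ball b s))
        ∂(ProbabilityTheory.cond volume (Metric.ball a t)) ≤
        ENNReal.ofReal (C1 * s ^ β) * J ^ (1 / p) := by
    intro a b s t hs h1 h2 hab hA hB
    have htp : 0 < t := by linarith
    refine (ball_avg hp1 ρ hm (Metric.measure_ball_pos _ _ htp).ne' measure_ball_lt_top.ne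
      (Metric.measure_ball_pos _ _ hs).ne' measure_ball_lt_top.ne
      (hJ _ _ measurableSet_ball measurableSet_ball hA hB (3 * s) (by positivity) ?_)).trans ?_
    · intro u hu v hv
      have hu := Metric.mem_ball.1 hu
      have hv := Metric.mem_ball'.1 hv
      have := dist_triangle4 u a b v
      linarith
    · rw [vol _ _ hs, vol _ _ htp]
      exact step_const hp1 hv hs h1 J
  set D := ENNReal.ofReal (C1 * r ^ β) * J ^ (1 / p) with hD
  have chain : ∀ z, Metric.ball z r ⊆ S →
      ∫⁻ v, ρ z v ∂(ProbabilityTheory.cond volume (Metric.ball z r)) ≤ D * (1 - ENNReal.ofReal q)⁻¹ := by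
    intro z hz
    set a : ℕ → ℝ≥0∞ := fun n => ∫⁻ v, ρ z v ∂(ProbabilityTheory.cond volume (Metric.ball z (r / 2 ^ n))) with ha
    have hrn : ∀ n : ℕ, 0 < r / 2 ^ n := fun n => by positivity
    have hrn' : ∀ n : ℕ, r / 2 ^ n ≤ r := fun n =>
      div_le_self hr.le (one_le_pow₀ (by norm_num))
    have ind : ∀ n, a n ≤ a (n + 1) + D * ENNReal.ofReal q ^ n := by
      intro n
      have := prob z _ (hrn n)
      have := prob z _ (hrn (n + 1))
      have h1 := tri_int (Measure.dirac z) (ProbabilityTheory.cond volume (Metric.ball z (r / 2 ^ (n + 1))))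
        (ProbabilityTheory.cond volume (Metric.ball z (r / 2 ^ n))) ρ hm ht
      simp only [lintegral_dirac] at h1
      refine h1.trans (add_le_add le_rfl ?_)
      have e : r / 2 ^ (n + 1) = r / 2 ^ n / 2 := by rw [pow_succ]; field_simp
      refine (step z z (r / 2 ^ n) (r / 2 ^ (n + 1)) (hrn n) e.ge (by rw [e]; linarith [hrn n])
        (by simpa using (hrn n).le) ((Metric.ball_subset_ball (hrn' _)).trans hz)
        ((Metric.ball_subset_ball (hrn' _)).trans hz)).trans (le_of_eq ?_)
      rw [hD, ← ENNReal.ofReal_pow hq0.le, mul_right_comm, ← ENNReal.ofReal_mul (by positivity)]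
      congr 2
      rw [hq, div_eq_mul_inv, ← inv_pow, ← one_div, Real.mul_rpow hr.le (by positivity), ← Real.rpow_natCast,
        ← Real.rpow_natCast, ← Real.rpow_mul (by norm_num), ← Real.rpow_mul (by norm_num), mul_comm β]
      ring
    have ind2 : ∀ n, a 0 ≤ a n + D * ∑ k ∈ Finset.range n, ENNReal.ofReal q ^ k := by
      intro n
      induction n with
      | zero => simp
      | succ n ih =>
        rw [Finset.sum_range_succ, mul_add, add_comm (D * _), ← add_assoc]
        exact ih.trans (add_le_add (ind n) le_rfl)
    have ind3 : ∀ n, a 0 ≤ a n + D * (1 - ENNReal.ofReal q)⁻¹ := by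
      intro n
      refine (ind2 n).trans ?_
      rw [← ENNReal.tsum_geometric]
      gcongr
      exact ENNReal.sum_le_tsum _
    have lim : Tendsto a atTop (𝓝 0) := by
      rw [ENNReal.tendsto_nhds_zero]
      intro ε hε
      have h1 := ENNReal.tendsto_nhds_zero.1 (h0 z) ε hε
      obtain ⟨η, hη, hsub⟩ := Metric.eventually_nhds_iff_ball.1 h1
      have h2 : Tendsto (fun n : ℕ => r / 2 ^ n) atTop (𝓝 0) := by
        have := (tendsto_pow_atTop_nhds_zero_of_lt_one (r := (1/2 : ℝ)) (by norm_num) (by norm_num)).const_mul r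
        simpa [div_eq_mul_inv] using this
      filter_upwards [h2.eventually_lt_const hη] with n hn
      have := prob z _ (hrn n)
      calc a n ≤ ∫⁻ v, ε ∂(ProbabilityTheory.cond volume (Metric.ball z (r / 2 ^ n))) := by
            refine lintegral_mono_ae ?_
            filter_upwards [ae_cond_mem measurableSet_ball] with v hv
            exact hsub v (Metric.ball_subset_ball hn.le hv)
        _ = ε := by simp
    have lim2 := lim.add_const (D * (1 - ENNReal.ofReal q)⁻¹)
    rw [zero_add] at lim2
    have := ge_of_tendsto' lim2 ind3
    simpa [ha] using this
  have := prob x r hr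
  have := prob y r hr
  have h1 := tri_int (Measure.dirac x) (ProbabilityTheory.cond volume (Metric.ball x r)) (Measure.dirac y) ρ hm ht
  have h2 := tri_int (ProbabilityTheory.cond volume (Metric.ball x r)) (ProbabilityTheory.cond volume (Metric.ball y r)) (Measure.dirac y) ρ hm ht
  simp only [lintegral_dirac] at h1 h2
  have h3 : ∫⁻ v, ρ v y ∂(ProbabilityTheory.cond volume (Metric.ball y r)) ≤ D * (1 - ENNReal.ofReal q)⁻¹ := by
    simpa only [hsym _ y] using chain y hyS
  have h4 := step x y r r hr (by linarith) le_rfl le_rfl hxS hyS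
  have h5 := chain x hxS
  calc ρ x y ≤ D * (1 - ENNReal.ofReal q)⁻¹ + (D + D * (1 - ENNReal.ofReal q)⁻¹) :=
        h1.trans (add_le_add h5 (h2.trans (add_le_add h4 h3)))
    _ = _ := by
        have hq2 : 0 < 1 - q := by linarith
        have e : (1 - ENNReal.ofReal q)⁻¹ = ENNReal.ofReal ((1 - q)⁻¹) := by
          rw [ENNReal.ofReal_inv_of_pos hq2, ENNReal.ofReal_sub _ hq0.le, ENNReal.ofReal_one]
        rw [show C1 * (2 * (1 - q)⁻¹ + 1) * r ^ β = C1 * r ^ β * (2 * (1 - q)⁻¹ + 1) by ring,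
          ENNReal.ofReal_mul (p := C1 * r ^ β) (by positivity),
          ENNReal.ofReal_add (by positivity) (by norm_num),
          ENNReal.ofReal_mul (p := 2) (by norm_num), e, hD]
        simp only [ENNReal.ofReal_one, ENNReal.ofReal_ofNat]
        ring

lemma F_meas {T : ℝ} (hT : 0 < T) {d : ℕ} (p α : ℝ) {Ω X : Type} [MeasurableSpace Ω] [MeasurableSpace X]
    (φ : Ω → EuclideanSpace ℝ (Fin d) → D0 T d)
    (hφ : @Measurable (Ω × EuclideanSpace ℝ (Fin d)) (D0 T d) inferInstance (Dsigma T d)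
          (fun q => φ q.1 q.2)) (a : X → Ω) (b c : X → EuclideanSpace ℝ (Fin d))
    (ha : Measurable a) (hb : Measurable b) (hc : Measurable c) :
    Measurable (fun q : X =>
      ENNReal.ofReal ((unifDist (φ (a q) (b q)) (φ (a q) (c q)) / dist (b q) (c q)) ^ p *
        grrWeight d α ‖b q‖ * grrWeight d α ‖c q‖)) := by
  have h1 : Measurable (fun q : X => unifDist (φ (a q) (b q)) (φ (a q) (c q))) := by
    have h := (ud_meas hT φ hφ).comp (ha.prodMk (hb.prodMk hc))
    simpa only [Function.comp_def] using h
  have h2 : Measurable (fun q : X => grrWeight d α ‖b q‖) := (w_meas d α).comp hb.norm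
  have h3 : Measurable (fun q : X => grrWeight d α ‖c q‖) := (w_meas d α).comp hc.norm
  have h4 : Measurable (fun q : X => dist (b q) (c q)) := hb.dist hc
  exact ((((h1.div h4).pow_const p).mul h2).mul h3).ennreal_ofReal

lemma abs_meas {Ω E : Type} [MeasurableSpace Ω] [MeasureSpace E] [SFinite (volume : Measure E)]
    (G : Ω → E → E → ℝ≥0∞)
    (hG : Measurable (fun q : (Ω × E) × E => G q.1.1 q.1.2 q.2)) :
    Measurable (fun q : Ω × E => ∫⁻ y, G q.1 q.2 y) := hG.lintegral_prod_right'

lemma abs_meas2 {Ω E : Type} [MeasurableSpace Ω] [MeasureSpace E] [SFinite (volume : Measure E)]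
    (G : Ω → E → E → ℝ≥0∞)
    (hG : Measurable (fun q : (Ω × E) × E => G q.1.1 q.1.2 q.2)) :
    Measurable (fun ω => ∫⁻ x, ∫⁻ y, G ω x y) := (abs_meas G hG).lintegral_prod_right'

lemma abs_swap {Ω E : Type} [MeasurableSpace Ω] [MeasureSpace E] [SFinite (volume : Measure E)]
    (P : Measure Ω) [SFinite P] (G : Ω → E → E → ℝ≥0∞)
    (hG : Measurable (fun q : (Ω × E) × E => G q.1.1 q.1.2 q.2)) :
    ∫⁻ ω, (∫⁻ x, ∫⁻ y, G ω x y) ∂P = ∫⁻ x, ∫⁻ y, ∫⁻ ω, G ω x y ∂P := by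
  rw [lintegral_lintegral_swap (abs_meas G hG).aemeasurable]
  congr 1; ext x
  have h4 : Measurable (fun q : Ω × E => G q.1 x q.2) :=
    hG.comp ((measurable_fst.prodMk measurable_const).prodMk measurable_snd :
      Measurable fun q : Ω × E => ((q.1, x), q.2))
  rw [lintegral_lintegral_swap h4.aemeasurable]

lemma Z_meas {T : ℝ} (hT : 0 < T) {d : ℕ} (p α : ℝ) {Ω : Type} [MeasurableSpace Ω]
    (φ : Ω → EuclideanSpace ℝ (Fin d) → D0 T d)
    (hφ : @Measurable (Ω × EuclideanSpace ℝ (Fin d)) (D0 T d) inferInstance (Dsigma T d)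
          (fun q => φ q.1 q.2)) : Measurable (grrZ p α φ) := by
  have h := F_meas hT p α φ hφ (fun q : (Ω × EuclideanSpace ℝ (Fin d)) × EuclideanSpace ℝ (Fin d) => q.1.1)
    (fun q => q.1.2) (fun q => q.2) measurable_fst.fst measurable_fst.snd measurable_snd
  have h2 := abs_meas2 (fun ω x y => ENNReal.ofReal ((unifDist (φ ω x) (φ ω y) / dist x y) ^ p *
        grrWeight d α ‖x‖ * grrWeight d α ‖y‖)) h
  exact h2.pow_const (1 / p)

lemma Z_int {T : ℝ} (hT : 0 < T) {d : ℕ} {p α : ℝ} (hp : 0 < p) (hα : 1 < α)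
    {Ω : Type} [MeasurableSpace Ω] (P : Measure Ω) [IsProbabilityMeasure P]
    (φ : Ω → EuclideanSpace ℝ (Fin d) → D0 T d) {c : ℝ} (hc : 0 < c)
    (hφ : @Measurable (Ω × EuclideanSpace ℝ (Fin d)) (D0 T d) inferInstance (Dsigma T d)
          (fun q => φ q.1 q.2))
    (hb : ∀ x y : EuclideanSpace ℝ (Fin d),
          ∫⁻ ω, ENNReal.ofReal (unifDist (φ ω x) (φ ω y) ^ p) ∂P
            ≤ ENNReal.ofReal (c * dist x y ^ p)) :
    (∫⁻ ω, grrZ p α φ ω ^ p ∂P) < ⊤ := by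
  have e : ∀ ω, grrZ p α φ ω ^ p = ∫⁻ x : EuclideanSpace ℝ (Fin d), ∫⁻ y : EuclideanSpace ℝ (Fin d),
      ENNReal.ofReal ((unifDist (φ ω x) (φ ω y) / dist x y) ^ p *
        grrWeight d α ‖x‖ * grrWeight d α ‖y‖) := by
    intro ω
    unfold grrZ
    rw [← ENNReal.rpow_mul, one_div, inv_mul_cancel₀ hp.ne', ENNReal.rpow_one]
  simp only [e]
  have h := F_meas hT p α φ hφ (fun q : (Ω × EuclideanSpace ℝ (Fin d)) × EuclideanSpace ℝ (Fin d) => q.1.1)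
    (fun q => q.1.2) (fun q => q.2) measurable_fst.fst measurable_fst.snd measurable_snd
  rw [abs_swap P (fun ω x y => ENNReal.ofReal ((unifDist (φ ω x) (φ ω y) / dist x y) ^ p *
        grrWeight d α ‖x‖ * grrWeight d α ‖y‖)) h]
  have e2 : ∀ x : EuclideanSpace ℝ (Fin d), ∫⁻ y : EuclideanSpace ℝ (Fin d), ∫⁻ ω,
      ENNReal.ofReal ((unifDist (φ ω x) (φ ω y) / dist x y) ^ p *
        grrWeight d α ‖x‖ * grrWeight d α ‖y‖) ∂P ≤
      ENNReal.ofReal c * ENNReal.ofReal (grrWeight d α ‖x‖) *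
        ∫⁻ y : EuclideanSpace ℝ (Fin d), ENNReal.ofReal (grrWeight d α ‖y‖) := by
    intro x
    rw [← lintegral_const_mul' _ _ (by finiteness)]
    refine lintegral_mono fun y => ?_
    have hx := w_pos d α ‖x‖
    have hy := w_pos d α ‖y‖
    have hd := dist_nonneg (x := x) (y := y)
    have e3 : ∀ ω, ENNReal.ofReal ((unifDist (φ ω x) (φ ω y) / dist x y) ^ p *
        grrWeight d α ‖x‖ * grrWeight d α ‖y‖) =
        ENNReal.ofReal (unifDist (φ ω x) (φ ω y) ^ p) *
        ENNReal.ofReal ((dist x y ^ p)⁻¹ * grrWeight d α ‖x‖ * grrWeight d α ‖y‖) := by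
      intro ω
      have := ud_nonneg (φ ω x) (φ ω y)
      rw [← ENNReal.ofReal_mul (by positivity), Real.div_rpow this hd]
      congr 1; ring
    simp only [e3]
    rw [lintegral_mul_const' _ _ (by finiteness)]
    refine (mul_le_mul' (hb x y) le_rfl).trans ?_
    rw [← ENNReal.ofReal_mul (by positivity), ← ENNReal.ofReal_mul (by positivity),
      ← ENNReal.ofReal_mul (by positivity)]
    refine ENNReal.ofReal_le_ofReal ?_
    calc c * dist x y ^ p * ((dist x y ^ p)⁻¹ * grrWeight d α ‖x‖ * grrWeight d α ‖y‖)
        = (dist x y ^ p * (dist x y ^ p)⁻¹) * (c * grrWeight d α ‖x‖ * grrWeight d α ‖y‖) := by ring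
      _ ≤ 1 * (c * grrWeight d α ‖x‖ * grrWeight d α ‖y‖) := by
          gcongr; exact mul_inv_le_one
      _ = _ := one_mul _
  have hw := w_int d hα
  refine (lintegral_mono e2).trans_lt ?_
  rw [lintegral_mul_const' _ _ hw.ne, lintegral_const_mul' _ _ (by finiteness)]
  exact ENNReal.mul_lt_top (ENNReal.mul_lt_top (by finiteness) hw) hw

lemma grr_bound (d : ℕ) (p α : ℝ) (hp1 : 1 ≤ p)
    (hp : 2 * (d : ℝ) < p) (hα : 1 < α) :
    ∃ c₀ : ℝ, 0 < c₀ ∧ ∀ {T : ℝ} {Ω : Type} (φ : Ω → EuclideanSpace ℝ (Fin d) → D0 T d) (ω : Ω),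
      ContinuousInD0 (φ ω) → ∀ x y : EuclideanSpace ℝ (Fin d), x ≠ y →
            ENNReal.ofReal (unifDist (φ ω x) (φ ω y)) ≤
              ENNReal.ofReal c₀ * grrZ p α φ ω *
                ENNReal.ofReal (dist x y ^ (1 - 2 * (d : ℝ) / p) *
                  max ((max ‖x‖ ‖y‖) ^ (2 * (d : ℝ) / p) *
                      (max (Real.log (max ‖x‖ ‖y‖)) 0) ^ (2 * α / p)) 1) := by
  have hp0 : 0 < p := by linarith
  obtain ⟨C, hC, hcore⟩ := core hp1 hp
  set K : ℝ := 9 ^ d * 3 ^ α with hK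
  have hKp : 0 < K := by positivity
  refine ⟨C * (K ^ 2) ^ (1 / p), by positivity, ?_⟩
  intro T Ω φ ω hcont x y hxy
  set ρ : EuclideanSpace ℝ (Fin d) → EuclideanSpace ℝ (Fin d) → ℝ≥0∞ :=
    fun u v => ENNReal.ofReal (unifDist (φ ω u) (φ ω v)) with hρ
  have htri : ∀ x y z, ρ x z ≤ ρ x y + ρ y z := by
    intro x y z
    rw [hρ, ← ENNReal.ofReal_add (ud_nonneg _ _) (ud_nonneg _ _)]
    exact ENNReal.ofReal_le_ofReal (ud_tri _ _ _)
  have hcu : Continuous (Function.uncurry fun u v => unifDist (φ ω u) (φ ω v)) := by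
    rw [Metric.continuous_iff]
    rintro ⟨u, v⟩ ε hε
    obtain ⟨δ₁, h1, H1⟩ := hcont u (ε / 2) (by positivity)
    obtain ⟨δ₂, h2, H2⟩ := hcont v (ε / 2) (by positivity)
    refine ⟨min δ₁ δ₂, lt_min h1 h2, ?_⟩
    rintro ⟨u', v'⟩ h
    rw [Prod.dist_eq, max_lt_iff] at h
    have a1 := H1 u' (by rw [dist_comm]; exact h.1.trans_le (min_le_left _ _))
    have a2 := H2 v' (by rw [dist_comm]; exact h.2.trans_le (min_le_right _ _))
    simp only [Function.uncurry]
    rw [Real.dist_eq, abs_lt]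
    have b1 := ud_tri (φ ω u) (φ ω u') (φ ω v)
    have b2 := ud_tri (φ ω u') (φ ω v') (φ ω v)
    have b3 := ud_tri (φ ω u') (φ ω u) (φ ω v')
    have b4 := ud_tri (φ ω u) (φ ω v) (φ ω v')
    rw [ud_comm (φ ω v') (φ ω v)] at b2
    rw [ud_comm (φ ω u') (φ ω u)] at b3
    constructor <;> linarith
  have hρc : Continuous (Function.uncurry ρ) := ENNReal.continuous_ofReal.comp hcu
  have h0 : ∀ x, Tendsto (ρ x) (𝓝 x) (𝓝 0) := by
    intro x
    have : Continuous (ρ x) := hρc.uncurry_left x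
    have h := this.tendsto x
    simpa [hρ, ud_self] using h
  have hsym : ∀ x y, ρ x y = ρ y x := fun x y => by simp only [hρ]; rw [ud_comm]
  set R := max ‖x‖ ‖y‖ with hR
  have hxR : ‖x‖ ≤ R := le_max_left _ _
  have hyR : ‖y‖ ≤ R := le_max_right _ _
  have hR0 : 0 ≤ R := (norm_nonneg x).trans hxR
  set l := max (Real.log R) 0 with hl
  have hl0 : 0 ≤ l := le_max_right _ _
  set W := max (R ^ d * l ^ α) 1 with hW
  have hW1 : 1 ≤ W := le_max_right _ _
  have hW0 : 0 < W := by linarith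
  set I := ∫⁻ x : EuclideanSpace ℝ (Fin d), ∫⁻ y : EuclideanSpace ℝ (Fin d),
      ENNReal.ofReal ((unifDist (φ ω x) (φ ω y) / dist x y) ^ p *
        grrWeight d α ‖x‖ * grrWeight d α ‖y‖) with hI
  have hdR : dist x y ≤ 2 * R := (dist_le_norm_add_norm x y).trans (by linarith)
  have hball : ∀ z : EuclideanSpace ℝ (Fin d), ‖z‖ ≤ R →
      Metric.ball z (dist x y) ⊆ Metric.closedBall 0 (3 * R) := by
    intro z hz u hu
    rw [mem_closedBall_zero_iff]
    rw [mem_ball_iff_norm] at hu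
    have := norm_le_norm_add_norm_sub' u z
    linarith
  have main := hcore ρ hρc.measurable htri hsym h0 (Metric.closedBall 0 (3 * R))
    (ENNReal.ofReal ((K * W) ^ 2) * I) x y (dist_pos.2 hxy) (hball x hxR) (hball y hyR) ?_
  · refine main.trans ?_
    have hWp : W ^ (2 / p) ≤ max (R ^ (2 * (d : ℝ) / p) * l ^ (2 * α / p)) 1 := by
      rcases max_choice (R ^ d * l ^ α) 1 with h | h
      · rw [hW, h]
        refine le_trans (le_of_eq ?_) (le_max_left _ _)
        rw [Real.mul_rpow (by positivity) (by positivity), ← Real.rpow_natCast, ← Real.rpow_mul hR0,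
          ← Real.rpow_mul hl0]
        congr 2 <;> ring
      · rw [hW, h, Real.one_rpow]; exact le_max_right _ _
    have hZ : grrZ p α φ ω = I ^ (1 / p) := rfl
    rw [hZ, ENNReal.mul_rpow_of_nonneg _ _ (by positivity),
      ENNReal.ofReal_rpow_of_nonneg (by positivity) (by positivity), ← mul_assoc,
      ← ENNReal.ofReal_mul (by positivity), mul_right_comm (ENNReal.ofReal _),
      ← ENNReal.ofReal_mul (by positivity)]
    refine mul_le_mul' (ENNReal.ofReal_le_ofReal ?_) le_rfl
    rw [mul_pow, Real.mul_rpow (by positivity) (by positivity)]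
    have e : (W ^ 2) ^ (1 / p) = W ^ (2 / p) := by
      rw [← Real.rpow_natCast, ← Real.rpow_mul hW0.le]; congr 1; push_cast; ring
    rw [e]
    calc C * dist x y ^ (1 - 2 * (d:ℝ) / p) * ((K ^ 2) ^ (1 / p) * W ^ (2 / p))
        = C * (K ^ 2) ^ (1 / p) * (dist x y ^ (1 - 2 * (d:ℝ) / p) * W ^ (2 / p)) := by ring
      _ ≤ _ := by gcongr
  · intro A B hA hB hAS hBS δ hδ hAB
    have hw : ∀ u ∈ Metric.closedBall (0 : EuclideanSpace ℝ (Fin d)) (3 * R),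
        1 ≤ (K * W) * grrWeight d α ‖u‖ := by
      intro u hu
      have := w_lower d hα hR0 (norm_nonneg u) (mem_closedBall_zero_iff.1 hu)
      rwa [inv_le_iff_one_le_mul₀' (by positivity)] at this
    calc ∫⁻ u in A, ∫⁻ v in B, ρ u v ^ p
        ≤ ∫⁻ u in A, ∫⁻ v in B, ENNReal.ofReal (δ ^ p * (K * W) ^ 2) *
          ENNReal.ofReal ((unifDist (φ ω u) (φ ω v) / dist u v) ^ p *
            grrWeight d α ‖u‖ * grrWeight d α ‖v‖) := by
          refine setLIntegral_mono' hA fun u hu => setLIntegral_mono' hB fun v hv => ?_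
          have hU := ud_nonneg (φ ω u) (φ ω v)
          have hd := dist_nonneg (x := u) (y := v)
          have wu := hw u (hAS hu)
          have wv := hw v (hBS hv)
          simp only [hρ]
          rw [ENNReal.ofReal_rpow_of_nonneg hU hp0.le, ← ENNReal.ofReal_mul (by positivity)]
          refine ENNReal.ofReal_le_ofReal ?_
          have e1 : unifDist (φ ω u) (φ ω v) ^ p ≤
              δ ^ p * (unifDist (φ ω u) (φ ω v) / dist u v) ^ p := by
            rw [← Real.mul_rpow hδ (by positivity)]
            refine Real.rpow_le_rpow hU ?_ hp0.le
            rcases hd.eq_or_lt with h | h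
            · have := dist_eq_zero.1 h.symm
              subst this
              simp [ud_self]
            · calc unifDist (φ ω u) (φ ω v) = dist u v * (unifDist (φ ω u) (φ ω v) / dist u v) := by
                    field_simp
                _ ≤ _ := by gcongr; exact hAB u hu v hv
          calc _ ≤ δ ^ p * (unifDist (φ ω u) (φ ω v) / dist u v) ^ p * 1 := by
                rw [mul_one]; exact e1
            _ ≤ δ ^ p * (unifDist (φ ω u) (φ ω v) / dist u v) ^ p *
                ((K * W * grrWeight d α ‖u‖) * (K * W * grrWeight d α ‖v‖)) := by
                gcongr; exact one_le_mul_of_one_le_of_one_le wu wv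
            _ = _ := by ring
      _ = ENNReal.ofReal (δ ^ p * (K * W) ^ 2) * ∫⁻ u in A, ∫⁻ v in B,
          ENNReal.ofReal ((unifDist (φ ω u) (φ ω v) / dist u v) ^ p *
            grrWeight d α ‖u‖ * grrWeight d α ‖v‖) := by
          rw [← lintegral_const_mul' _ _ (by finiteness)]
          congr 1; ext u
          rw [lintegral_const_mul' _ _ (by finiteness)]
      _ ≤ ENNReal.ofReal (δ ^ p * (K * W) ^ 2) * I := by
          gcongr
          exact (setLIntegral_le_lintegral _ _).trans
            (lintegral_mono fun u => setLIntegral_le_lintegral _ _)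
      _ = _ := by rw [ENNReal.ofReal_mul (by positivity), mul_assoc]

/-- **Generalized Garsia–Rodemich–Rumsey lemma for `(𝒟₀, 𝒟)`-valued random fields.**
If `φ : Ω × ℝ^d → 𝒟₀` is `ℱ ⊗ ℬ(ℝ^d)/𝒟`-measurable, `φ(ω,·)` is continuous for each
`ω`, and `E‖φ(·,x) − φ(·,y)‖₀^p ≤ c |x−y|^p` with `p > 2d`, then for `α > 1` the
functional `Z` is measurable and `p`-integrable, and, with a constant `c₀ = c₀(α,p,d)`,
`‖φ(ω,x) − φ(ω,y)‖₀ ≤ c₀ Z(ω) |x−y|^{1−2d/p} · max((|x|∨|y|)^{2d/p} (log⁺(|x|∨|y|))^{2α/p}, 1)`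
for all `ω, x, y`. -/
theorem grr_nonseparable (T : ℝ) (hT : 0 < T) (d : ℕ) (p α : ℝ)
    (hp : 2 * (d : ℝ) < p) (hα : 1 < α) :
    ∃ c₀ : ℝ, 0 < c₀ ∧
      ∀ (Ω : Type) (_ : MeasurableSpace Ω) (P : Measure Ω), IsProbabilityMeasure P →
        ∀ (φ : Ω → EuclideanSpace ℝ (Fin d) → D0 T d) (c : ℝ), 0 < c →
        @Measurable (Ω × EuclideanSpace ℝ (Fin d)) (D0 T d) inferInstance (Dsigma T d)
          (fun q => φ q.1 q.2) →
        (∀ ω, ContinuousInD0 (φ ω)) →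
        (∀ x y : EuclideanSpace ℝ (Fin d),
          ∫⁻ ω, ENNReal.ofReal (unifDist (φ ω x) (φ ω y) ^ p) ∂P
            ≤ ENNReal.ofReal (c * dist x y ^ p)) →
        (Measurable (grrZ p α φ) ∧
          (∫⁻ ω, grrZ p α φ ω ^ p ∂P) < ⊤ ∧
          ∀ (ω : Ω) (x y : EuclideanSpace ℝ (Fin d)),
            ENNReal.ofReal (unifDist (φ ω x) (φ ω y)) ≤
              ENNReal.ofReal c₀ * grrZ p α φ ω *
                ENNReal.ofReal (dist x y ^ (1 - 2 * (d : ℝ) / p) *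
                  max ((max ‖x‖ ‖y‖) ^ (2 * (d : ℝ) / p) *
                      (max (Real.log (max ‖x‖ ‖y‖)) 0) ^ (2 * α / p)) 1)) := by
  have hp0 : 0 < p := lt_of_le_of_lt (by positivity) hp
  have hb : ∃ c₀ : ℝ, 0 < c₀ ∧ ∀ {T : ℝ} {Ω : Type} (φ : Ω → EuclideanSpace ℝ (Fin d) → D0 T d) (ω : Ω),
      ContinuousInD0 (φ ω) → ∀ x y : EuclideanSpace ℝ (Fin d), x ≠ y →
            ENNReal.ofReal (unifDist (φ ω x) (φ ω y)) ≤
              ENNReal.ofReal c₀ * grrZ p α φ ω *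
                ENNReal.ofReal (dist x y ^ (1 - 2 * (d : ℝ) / p) *
                  max ((max ‖x‖ ‖y‖) ^ (2 * (d : ℝ) / p) *
                      (max (Real.log (max ‖x‖ ‖y‖)) 0) ^ (2 * α / p)) 1) := by
    rcases Nat.eq_zero_or_pos d with rfl | hd
    · exact ⟨1, one_pos, fun φ ω _ x y hxy => absurd (Subsingleton.elim x y) hxy⟩
    · have : (1:ℝ) ≤ d := by exact_mod_cast hd
      exact grr_bound d p α (by linarith) hp hα
  obtain ⟨c₀, hc₀, H⟩ := hb
  refine ⟨c₀, hc₀, ?_⟩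
  intro Ω _ P _ φ c hc hφ hcont hbd
  refine ⟨Z_meas hT p α φ hφ, Z_int hT hp0 hα P φ hc hφ hbd, ?_⟩
  intro ω x y
  by_cases hxy : x = y
  · subst hxy
    simp [ud_self]
  · exact H φ ω (hcont ω) x y hxy

end
end

section
/- Let (Ω, ℱ) be a measurable space and let φ: Ω × ℝ^d → 𝒟_0 be ℱ ⊗ ℬ(ℝ^d)/𝒟-measurable and such that φ(ω, ·): ℝ^d → (𝒟_0, ‖·‖_0) is continuous for every ω ∈ Ω. Then the function K: Ω × ℝ^d × ℝ^d → ℝ defined by K(ω, x, y) = ‖φ(ω,x) − φ(ω,y)‖_0 is jointly measurable with respect to ℱ ⊗ ℬ(ℝ^d) ⊗ ℬ(ℝ^d). -/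
open MeasureTheory Filter Set Topology

noncomputable section

/-- A countable set of times containing the last time point and dense enough to detect upper
bounds of right-continuous functions. -/
theorem exists_countable_times (T : ℝ) : ∃ S : Set (Icc0 T), S.Countable ∧
    ∀ (g : Icc0 T → ℝ), (∀ t, Tendsto g (nhdsWithin t (Set.Ioi t)) (nhds (g t))) →
      ∀ b, (∀ s ∈ S, g s ≤ b) → ∀ t, g t ≤ b := by
  obtain ⟨S, hSc, hSd⟩ := TopologicalSpace.exists_countable_dense (Icc0 T)
  refine ⟨S ∪ {t | Set.Ioi t = ∅}, hSc.union ?_, ?_⟩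
  · apply Set.Subsingleton.countable
    intro a ha b hb
    by_contra hne
    rcases lt_or_gt_of_ne hne with h | h
    · exact (Set.eq_empty_iff_forall_notMem.1 ha) b h
    · exact (Set.eq_empty_iff_forall_notMem.1 hb) a h
  · intro g hg b hb t
    rcases Set.eq_empty_or_nonempty (Set.Ioi t) with h | h
    · exact hb t (Or.inr h)
    · have h1 : t ∈ closure (Set.Ioi t) := by
        rw [closure_Ioi' h]; exact Set.self_mem_Ici
      have h2 : t ∈ closure (Set.Ioi t ∩ S) :=
        closure_minimal (hSd.open_subset_closure_inter isOpen_Ioi) isClosed_closure h1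
      haveI : (nhdsWithin t (Set.Ioi t ∩ S)).NeBot := mem_closure_iff_nhdsWithin_neBot.1 h2
      refine le_of_tendsto ((hg t).mono_left (nhdsWithin_mono t (Set.inter_subset_left (t := S)))) ?_
      filter_upwards [self_mem_nhdsWithin] with s hs
      exact hb s (Or.inl hs.2)

/-- The supremum of a right-continuous function is attained along the countable set. -/
theorem iSup_eq_of_times {ι : Type*} (S : Set ι) (g : ι → ℝ)
    (h : ∀ b, (∀ s ∈ S, g s ≤ b) → ∀ t, g t ≤ b) : ⨆ t, g t = ⨆ s : S, g s := by
  rcases isEmpty_or_nonempty ι with hE | hE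
  · simp [Real.iSup_of_isEmpty]
  have hne : Nonempty S := by
    by_contra hcon
    obtain ⟨t⟩ := hE
    have := h (g t - 1) (fun s hs => (hcon ⟨⟨s, hs⟩⟩).elim) t
    linarith
  by_cases hb : BddAbove (Set.range fun s : S => g s)
  · have hall : ∀ t, g t ≤ ⨆ s : S, g s :=
      h _ (fun s hs => le_ciSup hb (⟨s, hs⟩ : S))
    refine le_antisymm (ciSup_le hall) (ciSup_le fun s => ?_)
    exact le_ciSup (f := g) ⟨_, by rintro _ ⟨t, rfl⟩; exact hall t⟩ (s : ι)
  · rw [Real.iSup_of_not_bddAbove hb, Real.iSup_of_not_bddAbove]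
    rintro ⟨b, hb'⟩
    exact hb ⟨b, by rintro _ ⟨s, rfl⟩; exact hb' ⟨s, rfl⟩⟩

/-- **Joint measurability of `K(ω, x, y) = ‖φ(ω,x) − φ(ω,y)‖₀`.**
If `φ : Ω × ℝ^d → 𝒟₀` is `ℱ ⊗ ℬ(ℝ^d)/𝒟`-measurable and `φ(ω,·)` is continuous into
`(𝒟₀, ‖·‖₀)` for every `ω`, then `K` is `ℱ ⊗ ℬ(ℝ^d) ⊗ ℬ(ℝ^d)`-measurable. -/
theorem jointly_measurable_unifDist
    {Ω : Type*} [MeasurableSpace Ω] (T : ℝ) (d : ℕ)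
    (φ : Ω → EuclideanSpace ℝ (Fin d) → D0 T d)
    (hφmeas : @Measurable (Ω × EuclideanSpace ℝ (Fin d)) (D0 T d)
      inferInstance (Dsigma T d) (fun q => φ q.1 q.2))
    (hφcont : ∀ ω, ContinuousInD0 (φ ω)) :
    Measurable
      (fun q : Ω × EuclideanSpace ℝ (Fin d) × EuclideanSpace ℝ (Fin d) =>
        unifDist (φ q.1 q.2.1) (φ q.1 q.2.2)) := by
  obtain ⟨S, hSc, hS⟩ := exists_countable_times T
  haveI : Countable S := hSc.to_subtype
  have hev : ∀ t : Icc0 T,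
      Measurable (fun q : Ω × EuclideanSpace ℝ (Fin d) => (φ q.1 q.2).1 t) := by
    intro t
    have h1 : @Measurable _ _ (Dsigma T d) inferInstance (fun f : D0 T d => f.1 t) :=
      Measurable.of_comap_le
        (le_iSup (fun t : Icc0 T => MeasurableSpace.comap
          (fun f : D0 T d => f.1 t) inferInstance) t)
    exact @Measurable.comp _ _ _ _ (Dsigma T d) _ _ _ h1 hφmeas
  have heq : (fun q : Ω × EuclideanSpace ℝ (Fin d) × EuclideanSpace ℝ (Fin d) =>
        unifDist (φ q.1 q.2.1) (φ q.1 q.2.2)) =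
      fun q => ⨆ s : S, dist ((φ q.1 q.2.1).1 s) ((φ q.1 q.2.2).1 s) := by
    funext q
    refine iSup_eq_of_times S (fun t => dist ((φ q.1 q.2.1).1 t) ((φ q.1 q.2.2).1 t)) ?_
    exact hS _ fun t => ((φ q.1 q.2.1).2.1 t).dist ((φ q.1 q.2.2).2.1 t)
  rw [heq]
  refine Measurable.iSup fun s => Measurable.dist ?_ ?_
  · exact (hev s).comp (measurable_fst.prodMk measurable_snd.fst)
  · exact (hev s).comp (measurable_fst.prodMk measurable_snd.snd)

end
end

section
/- Let (Ξ, 𝒢, ℚ) be a probability space, (E, Δ) a metric space, T > 0, and X = (X_t)_{t∈[0,T]} a family of functions X_t: Ξ → E such that ω ↦ Δ(X_s(ω), X_t(ω)) is 𝒢-measurable for all s, t ∈ [0,T]. Suppose there exist non-decreasing functions δ: [0,T] → [0,∞) and θ: [0, T∨1] → [0,∞), with θ concave and θ(0) = 0, such that for all 0 ≤ s ≤ t ≤ u ≤ T and all A ∈ 𝒢, E_ℚ[min(Δ(X_s, X_t), Δ(X_t, X_u)) · 1_A] ≤ δ(u−s) · θ(ℚ(A)). Then for every n ∈ ℕ,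 E_ℚ[ max_{t ∈ S_{n+1}∖S_n} min( Δ(X_{t_n^−}, X_t), Δ(X_t, X_{t_n^+}) ) ] ≤ δ(T 2^{−n}) · 2^n θ(2^{−n}), where S_n = {T j 2^{−n} : j = 0, …, 2^n} and, for t ∈ S_{n+1}∖S_n, t_n^− and t_n^+ denote the largest point of S_n not exceeding t and the smallest point of S_n strictly greater than t, respectively. -/
open MeasureTheory Filter Set Topology
open scoped ENNReal

/-- The set where `j` is the first index realising the maximum. -/
def firstArgmax {Ξ : Type*} {N : ℕ} (f : Fin N → Ξ → ℝ) (j : Fin N) : Set Ξ :=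
  {ω | (∀ i, f i ω ≤ f j ω) ∧ ∀ i, i < j → f i ω < f j ω}

lemma firstArgmax_measurable {Ξ : Type*} [MeasurableSpace Ξ] {N : ℕ} (f : Fin N → Ξ → ℝ)
    (hf : ∀ j, Measurable (f j)) (j : Fin N) : MeasurableSet (firstArgmax f j) := by
  have h : firstArgmax f j = (⋂ i, {ω | f i ω ≤ f j ω}) ∩
      ⋂ i, ⋂ (_ : i < j), {ω | f i ω < f j ω} := by
    ext ω; simp [firstArgmax]
  rw [h]
  exact (MeasurableSet.iInter fun i => measurableSet_le (hf i) (hf j)).inter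
    (MeasurableSet.iInter fun i => MeasurableSet.iInter fun _ => measurableSet_lt (hf i) (hf j))

lemma firstArgmax_disjoint {Ξ : Type*} {N : ℕ} (f : Fin N → Ξ → ℝ) :
    Pairwise (Function.onFun Disjoint (firstArgmax f)) := by
  intro i j hij
  refine Set.disjoint_left.2 fun ω hi hj => ?_
  rcases lt_or_gt_of_ne hij with h | h
  · exact absurd (hi.1 j) (not_le.2 (hj.2 i h))
  · exact absurd (hj.1 i) (not_le.2 (hi.2 j h))

lemma firstArgmax_iUnion {Ξ : Type*} {N : ℕ} [NeZero N] (f : Fin N → Ξ → ℝ) :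
    ⋃ j, firstArgmax f j = Set.univ := by
  classical
  refine Set.eq_univ_of_forall fun ω => ?_
  obtain ⟨k, hk⟩ := Finite.exists_max (fun i => f i ω)
  obtain ⟨j, hj, hmin⟩ := WellFounded.has_min (wellFounded_lt (α := Fin N))
    {j | ∀ i, f i ω ≤ f j ω} ⟨k, hk⟩
  refine Set.mem_iUnion.2 ⟨j, hj, fun i hi => lt_of_not_ge fun hle => ?_⟩
  exact hmin i (fun l => (hj l).trans hle) hi

lemma lintegral_iSup_le {Ξ : Type*} [MeasurableSpace Ξ] (Q : Measure Ξ) [IsProbabilityMeasure Q]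
    {N : ℕ} [NeZero N] (f : Fin N → Ξ → ℝ) (hf : ∀ j, Measurable (f j))
    (d M : ℝ) (hd : 0 ≤ d) (hM : 1 ≤ M) (θ : ℝ → ℝ)
    (hθnonneg : ∀ u ∈ Set.Icc (0 : ℝ) M, 0 ≤ θ u)
    (hθ : ConcaveOn ℝ (Set.Icc 0 M) θ)
    (h : ∀ j, ∀ A : Set Ξ, MeasurableSet A →
      ∫⁻ ω in A, ENNReal.ofReal (f j ω) ∂Q ≤ ENNReal.ofReal (d * θ (Q A).toReal)) :
    ∫⁻ ω, ENNReal.ofReal (⨆ j, f j ω) ∂Q ≤ ENNReal.ofReal (d * (N * θ (1 / N))) := by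
  have hNpos : (0 : ℝ) < N := by exact_mod_cast Nat.pos_of_ne_zero (NeZero.ne N)
  have hA := firstArgmax_measurable f hf
  have hmem : ∀ j, (Q (firstArgmax f j)).toReal ∈ Set.Icc (0 : ℝ) M := fun j =>
    ⟨ENNReal.toReal_nonneg, (ENNReal.toReal_mono ENNReal.one_ne_top prob_le_one).trans (by simpa)⟩
  have hsum : ∑ j, (Q (firstArgmax f j)).toReal = 1 := by
    rw [← ENNReal.toReal_sum (fun j _ => measure_ne_top _ _), ← tsum_fintype (L := .unconditional _),
      ← measure_iUnion (firstArgmax_disjoint f) hA, firstArgmax_iUnion]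
    simp
  have hJ : ∑ j, θ (Q (firstArgmax f j)).toReal ≤ N * θ (1 / N) := by
    have := hθ.le_map_sum (t := Finset.univ) (w := fun _ : Fin N => 1 / (N : ℝ))
      (p := fun j => (Q (firstArgmax f j)).toReal) (fun _ _ => by positivity)
      (by simp [hNpos.ne']) (fun j _ => hmem j)
    simp only [smul_eq_mul, ← Finset.mul_sum, hsum, mul_one] at this
    rw [one_div, inv_mul_le_iff₀ hNpos] at this
    simpa using this
  rw [← setLIntegral_univ, ← firstArgmax_iUnion f,
    lintegral_iUnion hA (firstArgmax_disjoint f), tsum_fintype]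
  calc ∑ j, ∫⁻ ω in firstArgmax f j, ENNReal.ofReal (⨆ j, f j ω) ∂Q
      = ∑ j, ∫⁻ ω in firstArgmax f j, ENNReal.ofReal (f j ω) ∂Q := by
        refine Finset.sum_congr rfl fun j _ => setLIntegral_congr_fun (hA j) fun ω hω => ?_
        have : ⨆ i, f i ω = f j ω :=
          le_antisymm (ciSup_le hω.1) (le_ciSup (f := fun i => f i ω) (Set.finite_range _).bddAbove j)
        simp only [this]
    _ ≤ ∑ j, ENNReal.ofReal (d * θ (Q (firstArgmax f j)).toReal) :=
        Finset.sum_le_sum fun j _ => h j _ (hA j)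
    _ = ENNReal.ofReal (d * ∑ j, θ (Q (firstArgmax f j)).toReal) := by
        rw [Finset.mul_sum, ENNReal.ofReal_sum_of_nonneg]
        exact fun j _ => mul_nonneg hd (hθnonneg _ (hmem j))
    _ ≤ _ := ENNReal.ofReal_le_ofReal (mul_le_mul_of_nonneg_left hJ hd)

/-- **Lemma (dyadic oscillation estimate).**
Under the hypothesis `E[min(Δ(X_s,X_t), Δ(X_t,X_u)) ⬝ 1_A] ≤ δ(u−s)·θ(ℚ A)`
(with `δ, θ` non-decreasing, `θ` concave, `θ 0 = 0`), one has, for every `n`,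
`E[max_{t ∈ S_{n+1}∖S_n} min(Δ(X_{t_n^−}, X_t), Δ(X_t, X_{t_n^+}))]
  ≤ δ(T 2^{−n}) · 2^n θ(2^{−n})`,
where the points of `S_{n+1}∖S_n` are `t = T(2j+1)/2^{n+1}`, `j = 0, …, 2^n − 1`, with
`t_n^− = T j/2^n` and `t_n^+ = T (j+1)/2^n`. -/
theorem dyadic_oscillation_estimate
    {Ξ : Type*} [MeasurableSpace Ξ] (Q : Measure Ξ) [IsProbabilityMeasure Q]
    {E : Type*} [MetricSpace E]
    (T : ℝ) (hT : 0 < T)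
    (X : ℝ → Ξ → E)
    (hmeas : ∀ s ∈ Set.Icc (0 : ℝ) T, ∀ t ∈ Set.Icc (0 : ℝ) T,
      Measurable fun ω => dist (X s ω) (X t ω))
    (δ θ : ℝ → ℝ)
    (hδmono : MonotoneOn δ (Set.Icc 0 T))
    (hδnonneg : ∀ u ∈ Set.Icc (0 : ℝ) T, 0 ≤ δ u)
    (hθmono : MonotoneOn θ (Set.Icc 0 (max T 1)))
    (hθ0 : θ 0 = 0) (hθnonneg : ∀ u ∈ Set.Icc (0 : ℝ) (max T 1), 0 ≤ θ u)
    (hθconcave : ConcaveOn ℝ (Set.Icc 0 (max T 1)) θ)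
    (hineq : ∀ s t u : ℝ, 0 ≤ s → s ≤ t → t ≤ u → u ≤ T →
      ∀ A : Set Ξ, MeasurableSet A →
        ∫⁻ ω in A,
            ENNReal.ofReal (min (dist (X s ω) (X t ω)) (dist (X t ω) (X u ω))) ∂Q
          ≤ ENNReal.ofReal (δ (u - s) * θ (Q A).toReal))
    (n : ℕ) :
    ∫⁻ ω, ENNReal.ofReal
        (⨆ j : Fin (2 ^ n),
          min (dist (X (T * ((j : ℕ) : ℝ) / 2 ^ n) ω)
                 (X (T * (2 * ((j : ℕ) : ℝ) + 1) / 2 ^ (n + 1)) ω))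
              (dist (X (T * (2 * ((j : ℕ) : ℝ) + 1) / 2 ^ (n + 1)) ω)
                 (X (T * (((j : ℕ) : ℝ) + 1) / 2 ^ n) ω))) ∂Q
      ≤ ENNReal.ofReal (δ (T / 2 ^ n) * (2 ^ n * θ (1 / 2 ^ n))) := by
  have hp : (0 : ℝ) < 2 ^ n := by positivity
  have hp1 : (1 : ℝ) ≤ 2 ^ n := one_le_pow₀ (by norm_num)
  have key : ∀ j : Fin (2 ^ n), 0 ≤ T * ((j : ℕ) : ℝ) / 2 ^ n ∧
      T * ((j : ℕ) : ℝ) / 2 ^ n ≤ T * (2 * ((j : ℕ) : ℝ) + 1) / 2 ^ (n + 1) ∧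
      T * (2 * ((j : ℕ) : ℝ) + 1) / 2 ^ (n + 1) ≤ T * (((j : ℕ) : ℝ) + 1) / 2 ^ n ∧
      T * (((j : ℕ) : ℝ) + 1) / 2 ^ n ≤ T := by
    intro j
    have hj : ((j : ℕ) : ℝ) + 1 ≤ 2 ^ n := by exact_mod_cast j.2
    have e : T * (2 * ((j : ℕ) : ℝ) + 1) / 2 ^ (n + 1) = T * (((j : ℕ) : ℝ) + 1 / 2) / 2 ^ n := by
      rw [pow_succ]; field_simp
    rw [e]
    refine ⟨by positivity, ?_, ?_, ?_⟩
    · gcongr; linarith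
    · gcongr; linarith
    · rw [div_le_iff₀ hp]; gcongr
  have main := lintegral_iSup_le Q (N := 2 ^ n)
    (fun j ω => min (dist (X (T * ((j : ℕ) : ℝ) / 2 ^ n) ω)
                 (X (T * (2 * ((j : ℕ) : ℝ) + 1) / 2 ^ (n + 1)) ω))
              (dist (X (T * (2 * ((j : ℕ) : ℝ) + 1) / 2 ^ (n + 1)) ω)
                 (X (T * (((j : ℕ) : ℝ) + 1) / 2 ^ n) ω)))
    (fun j => by
      obtain ⟨h1, h2, h3, h4⟩ := key j
      exact (hmeas _ ⟨h1, by linarith⟩ _ ⟨by linarith, by linarith⟩).min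
        (hmeas _ ⟨by linarith, by linarith⟩ _ ⟨by linarith, h4⟩))
    (δ (T / 2 ^ n)) (max T 1)
    (hδnonneg _ ⟨by positivity, div_le_self hT.le hp1⟩) (le_max_right _ _) θ hθnonneg hθconcave
    (fun j A hA => by
      obtain ⟨h1, h2, h3, h4⟩ := key j
      have := hineq _ _ _ h1 h2 h3 h4 A hA
      have e : T * (((j : ℕ) : ℝ) + 1) / 2 ^ n - T * ((j : ℕ) : ℝ) / 2 ^ n = T / 2 ^ n := by ring
      rwa [e] at this)
  simpa only [Nat.cast_pow, Nat.cast_ofNat] using main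
end
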